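/- If (X,𝒳,μ,T) is a weakly mixing invertible measure-preserving system on a Lebesgue probability space, then for every d ∈ ℕ it has a strictly ergodic topological model (X̂,T̂) such that the action of ⟨τ_d,σ_d⟩ on N_d(X̂) is strictly ergodic. -/

import Mathlib

open MeasureTheory Topology Filter

namespace HSY

/-- The group structure on self-homeomorphisms of a topological space,
with `a * b = b.trans a` (i.e. composition `a ∘ b`). -/
instance homeoGroup (X : Type*) [TopologicalSpace X] : Group (X ≃ₜ X) where
  mul a b := b.trans a
  one := Homeomorph.refl X
  inv := Homeomorph.symm
  mul_assoc a b c := rfl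
  one_mul a := by ext x; rfl
  mul_one a := by ext x; rfl
  inv_mul_cancel a := by
    show a.trans a.symm = Homeomorph.refl X
    ext x; exact a.symm_apply_apply x

/-- A measure-theoretic isomorphism (mod null sets) between the system `(X, μ, T)` and the
system `(Y, ν, S)`. -/
def MeasIso {X Y : Type*} [MeasurableSpace X] [MeasurableSpace Y]
    (μ : Measure X) (T : X → X) (ν : Measure Y) (S : Y → Y) : Prop :=
  ∃ (φ : X → Y) (ψ : Y → X), Measurable φ ∧ Measurable ψ ∧
    Measure.map φ μ = ν ∧
    (∀ᵐ x ∂μ, ψ (φ x) = x) ∧ (∀ᵐ y ∂ν, φ (ψ y) = y) ∧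
    (∀ᵐ x ∂μ, φ (T x) = S (φ x))

/-- The orbit of a point under the group of homeomorphisms generated by `gens`. -/
def grpOrbit {Y : Type*} [TopologicalSpace Y] (gens : Set (Y ≃ₜ Y)) (y : Y) : Set Y :=
  {z | ∃ g ∈ Subgroup.closure gens, (g : Y ≃ₜ Y) y = z}

/-- The action of the group of homeomorphisms generated by `gens` on the (invariant) set `A`
is strictly ergodic: the orbit of every point of `A` is dense in `A` (minimality), and there is
exactly one invariant Borel probability measure giving full mass to `A` (unique ergodicity). -/
def StrictlyErgodicOn {Y : Type*} [TopologicalSpace Y] [MeasurableSpace Y]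
    (gens : Set (Y ≃ₜ Y)) (A : Set Y) : Prop :=
  (∀ y ∈ A, closure (grpOrbit gens y) = A) ∧
  (∃! ν : Measure Y, IsProbabilityMeasure ν ∧ ν A = 1 ∧ ∀ g ∈ gens, MeasurePreserving g ν ν)

/-- A homeomorphism is strictly ergodic: minimal and uniquely ergodic. -/
def StrictlyErgodicHomeo {Y : Type*} [TopologicalSpace Y] [MeasurableSpace Y] (S : Y ≃ₜ Y) :
    Prop :=
  (∀ y : Y, Dense (Set.range fun n : ℤ => (S ^ n) y)) ∧
  (∃! ν : Measure Y, IsProbabilityMeasure ν ∧ MeasurePreserving S ν ν)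

/-- `(Y, ν, S)` is a topological model of the measure preserving system `(X, μ, T)`:
`ν` is an `S`-invariant Borel probability measure and the two systems are measure
theoretically isomorphic. -/
def IsModel {X : Type*} [MeasurableSpace X] (μ : Measure X) (T : X → X)
    {Y : Type*} [TopologicalSpace Y] [MeasurableSpace Y] (S : Y ≃ₜ Y) (ν : Measure Y) : Prop :=
  IsProbabilityMeasure ν ∧ MeasurePreserving S ν ν ∧ MeasIso μ T ν S

/-- `τ_d = S × ⋯ × S` (`d` times) acting on `Y^d`. -/
def tauHomeo {Y : Type*} [TopologicalSpace Y] (S : Y ≃ₜ Y) (d : ℕ) :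
    (Fin d → Y) ≃ₜ (Fin d → Y) :=
  Homeomorph.piCongrRight fun _ => S

/-- `σ_d = S × S² × ⋯ × S^d` acting on `Y^d`. -/
def sigmaHomeo {Y : Type*} [TopologicalSpace Y] (S : Y ≃ₜ Y) (d : ℕ) :
    (Fin d → Y) ≃ₜ (Fin d → Y) :=
  Homeomorph.piCongrRight fun i => S ^ ((i : ℕ) + 1)

/-- The generators `τ_d, σ_d` of the group `⟨τ_d, σ_d⟩`. -/
def apGens {Y : Type*} [TopologicalSpace Y] (S : Y ≃ₜ Y) (d : ℕ) :
    Set ((Fin d → Y) ≃ₜ (Fin d → Y)) :=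
  {tauHomeo S d, sigmaHomeo S d}

theorem integral_birkhoffAverage {α : Type*} [MeasurableSpace α] {μ : Measure α}
    {f : α → α} (hf : MeasurePreserving f μ μ) {g : α → ℝ} (hg : Integrable g μ)
    {n : ℕ} (hn : n ≠ 0) :
    ∫ x, birkhoffAverage ℝ f g n x ∂μ = ∫ x, g x ∂μ := by
  have key : ∀ k : ℕ, ∫ x, g (f^[k] x) ∂μ = ∫ x, g x ∂μ := fun k => by
      have h := integral_map (μ := μ) (hf.iterate k).measurable.aemeasurable
        (f := g) (by rw [(hf.iterate k).map_eq]; exact hg.aestronglyMeasurable)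
      rw [(hf.iterate k).map_eq] at h
      exact h.symm
  have hint : ∀ k : ℕ, Integrable (fun x => g (f^[k] x)) μ := fun k =>
    ((hf.iterate k).integrable_comp hg.aestronglyMeasurable).2 hg
  simp only [birkhoffAverage, birkhoffSum, smul_eq_mul]
  rw [integral_const_mul, integral_finsetSum _ fun k _ => hint k]
  simp only [key, Finset.sum_const, Finset.card_range, nsmul_eq_mul]
  have : (n : ℝ) ≠ 0 := by exact_mod_cast hn
  field_simp

theorem measurable_birkhoffAverage {α : Type*} [MeasurableSpace α] {f : α → α}
    (hf : Measurable f) {g : α → ℝ} (hg : Measurable g) (n : ℕ) :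
    Measurable (birkhoffAverage ℝ f g n) := by
  have h : Measurable fun x => ∑ k ∈ Finset.range n, g (f^[k] x) :=
    Finset.measurable_sum _ fun k _ => hg.comp (hf.iterate k)
  exact h.const_smul ((n : ℝ)⁻¹)

theorem abs_birkhoffAverage_le {α : Type*} {f : α → α} {g : α → ℝ} {C : ℝ} (hC : ∀ x, |g x| ≤ C)
    (hC0 : 0 ≤ C) (n : ℕ) (x : α) : |birkhoffAverage ℝ f g n x| ≤ C := by
  rcases Nat.eq_zero_or_pos n with rfl | hn
  · simpa using hC0
  have hn' : (0 : ℝ) < n := by exact_mod_cast hn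
  simp only [birkhoffAverage, birkhoffSum, smul_eq_mul, abs_mul, abs_inv, Nat.abs_cast]
  rw [inv_mul_le_iff₀ hn']
  calc |∑ k ∈ Finset.range n, g (f^[k] x)| ≤ ∑ k ∈ Finset.range n, |g (f^[k] x)| :=
        Finset.abs_sum_le_sum_abs _ _
    _ ≤ ∑ k ∈ Finset.range n, C := Finset.sum_le_sum fun k _ => hC _
    _ = n * C := by simp

/-- The mean ergodic theorem in `L¹` for bounded functions and ergodic maps. -/
theorem tendsto_integral_abs_birkhoffAverage_sub {α : Type*} [MeasurableSpace α] {μ : Measure α}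
    [IsProbabilityMeasure μ] {f : α → α} (hf : Ergodic f μ) {g : α → ℝ} (hg : Measurable g)
    {C : ℝ} (hC : ∀ x, |g x| ≤ C) :
    Tendsto (fun n => ∫ x, |birkhoffAverage ℝ f g n x - ∫ y, g y ∂μ| ∂μ) atTop (𝓝 0) := by
  have hne : Nonempty α := by
    by_contra h
    rw [not_nonempty_iff] at h
    have := measure_univ (μ := μ)
    simp [Set.univ_eq_empty_iff.2 h] at this
  have hC0 : 0 ≤ C := (abs_nonneg _).trans (hC hne.some)
  have hmp := hf.toMeasurePreserving
  have hgL : MemLp g 2 μ := MemLp.of_bound hg.aestronglyMeasurable C (ae_of_all _ hC)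
  have hgi : Integrable g μ := hgL.integrable (by norm_num)
  set U : Lp ℝ 2 μ →L[ℝ] Lp ℝ 2 μ :=
    (Lp.compMeasurePreservingₗᵢ ℝ f hmp).toContinuousLinearMap with hU
  have hUnorm : ‖U‖ ≤ 1 := LinearIsometry.norm_toContinuousLinearMap_le _
  have hUapp : ∀ v : Lp ℝ 2 μ, U v = Lp.compMeasurePreserving f hmp v := fun v => rfl
  set G : Lp ℝ 2 μ := hgL.toLp g with hG
  have hlim := U.tendsto_birkhoffAverage_orthogonalProjection hUnorm G
  set P : Lp ℝ 2 μ := ((U.eqLocus (1 : Lp ℝ 2 μ →L[ℝ] Lp ℝ 2 μ)).orthogonalProjectionOnto G).1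
    with hP
  have hPfix : U P = P :=
    ((U.eqLocus (1 : Lp ℝ 2 μ →L[ℝ] Lp ℝ 2 μ)).orthogonalProjectionOnto G).2
  obtain ⟨c, hc⟩ : ∃ c, P =ᵐ[μ] Function.const α c := by
    refine hf.ae_eq_const_of_ae_eq_comp_ae (Lp.aestronglyMeasurable P) ?_
    rw [hUapp] at hPfix
    have := Lp.coeFn_compMeasurePreserving P hmp
    rw [hPfix] at this
    exact this.symm
  have hUk : ∀ k : ℕ, (U^[k] G : Lp ℝ 2 μ) =ᵐ[μ] fun x => g (f^[k] x) := by
    intro k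
    induction k with
    | zero => simpa using hgL.coeFn_toLp
    | succ k ih =>
      rw [Function.iterate_succ_apply', hUapp]
      refine (Lp.coeFn_compMeasurePreserving _ hmp).trans ?_
      have := hmp.quasiMeasurePreserving.ae_eq_comp ih
      refine this.trans (Eventually.of_forall fun x => ?_)
      simp [Function.comp, Function.iterate_succ_apply]
  have hA : ∀ n : ℕ, (birkhoffAverage ℝ U _root_.id n G : Lp ℝ 2 μ) =ᵐ[μ]
      birkhoffAverage ℝ f g n := by
    intro n
    have h1 : (birkhoffSum U _root_.id n G : Lp ℝ 2 μ) =ᵐ[μ] birkhoffSum f g n := by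
      induction n with
      | zero => simpa using Lp.coeFn_zero ℝ 2 μ
      | succ n ih =>
        rw [birkhoffSum_succ]
        refine (Lp.coeFn_add _ _).trans ?_
        filter_upwards [ih, hUk n] with x h1 h2
        simp [birkhoffSum_succ, h1, h2]
    refine (Lp.coeFn_smul _ _).trans ?_
    filter_upwards [h1] with x hx
    simp [birkhoffAverage, hx]
  have hb : ∀ n, ∫ x, |birkhoffAverage ℝ f g n x - c| ∂μ ≤
      ‖birkhoffAverage ℝ U _root_.id n G - P‖ := by
    intro n
    set D : Lp ℝ 2 μ := birkhoffAverage ℝ U _root_.id n G - P with hD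
    have hDae : (D : α → ℝ) =ᵐ[μ] fun x => birkhoffAverage ℝ f g n x - c := by
      refine (Lp.coeFn_sub _ _).trans ?_
      filter_upwards [hA n, hc] with x h1 h2
      simp [h1, h2]
    have h1 : ∫ x, |birkhoffAverage ℝ f g n x - c| ∂μ = ∫ x, ‖D x‖ ∂μ := by
      refine integral_congr_ae ?_
      filter_upwards [hDae] with x hx
      rw [hx, Real.norm_eq_abs]
    rw [h1, Lp.norm_def, integral_norm_eq_lintegral_enorm (Lp.aestronglyMeasurable D),
      ← eLpNorm_one_eq_lintegral_enorm]
    exact ENNReal.toReal_mono (Lp.eLpNorm_ne_top D)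
      (eLpNorm_le_eLpNorm_of_exponent_le (by norm_num) (Lp.aestronglyMeasurable D))
  have hlim0 : Tendsto (fun n => ‖birkhoffAverage ℝ U _root_.id n G - P‖) atTop (𝓝 0) := by
    have := (tendsto_iff_norm_sub_tendsto_zero.1 hlim)
    exact this
  have hc0 : Tendsto (fun n => ∫ x, |birkhoffAverage ℝ f g n x - c| ∂μ) atTop (𝓝 0) :=
    squeeze_zero (fun n => integral_nonneg fun x => abs_nonneg _) hb hlim0
  have hint : ∀ n, Integrable (birkhoffAverage ℝ f g n) μ := fun n =>
    Integrable.of_bound (measurable_birkhoffAverage hmp.measurable hg n).aestronglyMeasurable C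
      (ae_of_all _ fun x => abs_birkhoffAverage_le hC hC0 n x)
  have hce : ∫ y, g y ∂μ = c := by
    have h1 : ∀ n : ℕ, n ≠ 0 → |∫ y, g y ∂μ - c| ≤ ∫ x, |birkhoffAverage ℝ f g n x - c| ∂μ := by
      intro n hn
      have h2 : ∫ y, g y ∂μ - c = ∫ x, (birkhoffAverage ℝ f g n x - c) ∂μ := by
        rw [integral_sub (hint n) (integrable_const c), integral_birkhoffAverage hmp hgi hn]
        simp
      rw [h2]
      exact abs_integral_le_integral_abs
    have h3 : |∫ y, g y ∂μ - c| ≤ 0 :=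
      ge_of_tendsto hc0 ((eventually_ne_atTop 0).mono h1)
    have := abs_nonpos_iff.1 h3
    linarith
  rw [hce]
  exact hc0

/-- Weak mixing expressed by strong Cesàro convergence of correlations of sets. -/
def CesaroMixing {X : Type*} [MeasurableSpace X] (μ : Measure X) (T : X → X) : Prop :=
  ∀ A B : Set X, MeasurableSet A → MeasurableSet B →
    Tendsto (fun N : ℕ => (N : ℝ)⁻¹ * ∑ j ∈ Finset.range N,
      |μ.real (T^[j] ⁻¹' A ∩ B) - μ.real A * μ.real B|) atTop (𝓝 0)

theorem tendsto_cesaro_measureReal_inter {α : Type*} [MeasurableSpace α] {μ : Measure α}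
    [IsProbabilityMeasure μ] {f : α → α} (hf : Ergodic f μ) {A B : Set α}
    (hA : MeasurableSet A) :
    Tendsto (fun N : ℕ => (N : ℝ)⁻¹ * ∑ j ∈ Finset.range N, μ.real (f^[j] ⁻¹' A ∩ B))
      atTop (𝓝 (μ.real A * μ.real B)) := by
  classical
  have hmp := hf.toMeasurePreserving
  set g : α → ℝ := A.indicator 1 with hg
  have hgm : Measurable g := measurable_one.indicator hA
  have hgC : ∀ x, |g x| ≤ 1 := fun x => by
    by_cases hx : x ∈ A <;> simp [hg, hx]
  have hgint : ∫ y, g y ∂μ = μ.real A := integral_indicator_one hA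
  have hlim := tendsto_integral_abs_birkhoffAverage_sub hf hgm hgC
  rw [hgint] at hlim
  have hint : ∀ n, Integrable (birkhoffAverage ℝ f g n) μ := fun n =>
    Integrable.of_bound (measurable_birkhoffAverage hmp.measurable hgm n).aestronglyMeasurable 1
      (ae_of_all _ fun x => abs_birkhoffAverage_le hgC zero_le_one n x)
  have hform : ∀ N : ℕ, (N : ℝ)⁻¹ * ∑ j ∈ Finset.range N, μ.real (f^[j] ⁻¹' A ∩ B) =
      ∫ x in B, birkhoffAverage ℝ f g N x ∂μ := by
    intro N
    simp only [birkhoffAverage, birkhoffSum, smul_eq_mul]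
    rw [integral_const_mul, integral_finsetSum]
    · congr 1
      refine Finset.sum_congr rfl fun j _ => ?_
      have hm : MeasurableSet (f^[j] ⁻¹' A) := (hmp.iterate j).measurable hA
      have : (fun x => g (f^[j] x)) = (f^[j] ⁻¹' A).indicator 1 := by
        ext x; simp [hg, Set.indicator_apply]
      rw [this, integral_indicator_one hm, measureReal_restrict_apply hm]
    · intro j _
      exact ((integrable_const (1 : ℝ)).mono'
        (hgm.comp (hmp.iterate j).measurable).aestronglyMeasurable
        (ae_of_all _ fun x => hgC _))
  rw [tendsto_iff_norm_sub_tendsto_zero]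
  refine squeeze_zero (fun _ => norm_nonneg _) (fun N => ?_) hlim
  rw [hform, Real.norm_eq_abs]
  have h2 : μ.real A * μ.real B = ∫ x in B, μ.real A ∂μ := by
    rw [setIntegral_const, smul_eq_mul, mul_comm]
  rw [h2, ← integral_sub (hint N).integrableOn (integrable_const _)]
  refine abs_integral_le_integral_abs.trans ?_
  exact setIntegral_le_integral ((hint N).sub (integrable_const _)).abs
    (ae_of_all _ fun x => abs_nonneg _)

theorem cesaroMixing_of_ergodic_prod {X : Type*} [MeasurableSpace X] {μ : Measure X}
    [IsProbabilityMeasure μ] {T : X → X} (hT : Measurable T)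
    (hwm : Ergodic (Prod.map T T) (μ.prod μ)) : CesaroMixing μ T := by
  intro A B hA hB
  have hit : ∀ j : ℕ, (Prod.map T T)^[j] = Prod.map T^[j] T^[j] := fun j => Prod.map_iterate T T j
  have hTu : ∀ j : ℕ, Measurable T^[j] := fun j => hT.iterate j
  set a : ℕ → ℝ := fun j => μ.real (T^[j] ⁻¹' A ∩ B) with ha
  set c : ℝ := μ.real A * μ.real B with hc
  have h1 : Tendsto (fun N : ℕ => (N : ℝ)⁻¹ * ∑ j ∈ Finset.range N, a j) atTop (𝓝 c) := by
    have := tendsto_cesaro_measureReal_inter hwm (B := B ×ˢ Set.univ)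
      (hA.prod MeasurableSet.univ)
    simp only [hit, Set.preimage_prod_map_prod, Set.prod_inter_prod, measureReal_prod_prod,
      Set.preimage_univ, Set.univ_inter, probReal_univ, mul_one] at this
    exact this
  have h2 : Tendsto (fun N : ℕ => (N : ℝ)⁻¹ * ∑ j ∈ Finset.range N, a j ^ 2) atTop
      (𝓝 (c ^ 2)) := by
    have := tendsto_cesaro_measureReal_inter hwm (B := B ×ˢ B) (hA.prod hA)
    simp only [hit, Set.preimage_prod_map_prod, Set.prod_inter_prod, measureReal_prod_prod]
      at this
    have e : μ.real A * μ.real A * (μ.real B * μ.real B) = c ^ 2 := by rw [hc]; ring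
    rw [e] at this
    simpa only [← sq] using this
  have h3 : Tendsto (fun N : ℕ => (N : ℝ)⁻¹ * ∑ j ∈ Finset.range N, (a j - c) ^ 2) atTop
      (𝓝 0) := by
    have h := (h2.sub (h1.const_mul (2 * c))).add_const (c ^ 2)
    have e0 : c ^ 2 - 2 * c * c + c ^ 2 = 0 := by ring
    rw [e0] at h
    refine h.congr' ?_
    filter_upwards [eventually_ne_atTop 0] with N hN
    have hN' : (N : ℝ) ≠ 0 := by exact_mod_cast hN
    have : ∑ j ∈ Finset.range N, (a j - c) ^ 2 =
        ∑ j ∈ Finset.range N, a j ^ 2 - 2 * c * ∑ j ∈ Finset.range N, a j + N * c ^ 2 := by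
      rw [Finset.mul_sum, ← Finset.sum_sub_distrib]
      have : (N : ℝ) * c ^ 2 = ∑ j ∈ Finset.range N, c ^ 2 := by simp
      rw [this, ← Finset.sum_add_distrib]
      exact Finset.sum_congr rfl fun j _ => by ring
    rw [this]
    field_simp
  have h4 := h3.sqrt
  rw [Real.sqrt_zero] at h4
  refine squeeze_zero (fun N => by positivity) (fun N => ?_) h4
  apply Real.le_sqrt_of_sq_le
  rcases Nat.eq_zero_or_pos N with rfl | hN
  · simp
  have hN' : (0 : ℝ) < N := by exact_mod_cast hN
  have hcs := sq_sum_le_card_mul_sum_sq (s := Finset.range N) (f := fun j => |a j - c|)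
  simp only [Finset.card_range, sq_abs] at hcs
  rw [mul_pow, inv_pow, inv_mul_le_iff₀ (by positivity)]
  calc _ ≤ _ := hcs
    _ = _ := by field_simp

theorem CesaroMixing.iterate {X : Type*} [MeasurableSpace X] {μ : Measure X}
    {T : X → X} (h : CesaroMixing μ T) {m : ℕ} (hm : 0 < m) : CesaroMixing μ T^[m] := by
  intro A B hA hB
  have h1 := h A B hA hB
  set b : ℕ → ℝ := fun j => |μ.real (T^[j] ⁻¹' A ∩ B) - μ.real A * μ.real B| with hb
  have hm0 : (0 : ℝ) < m := by exact_mod_cast hm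
  have h2 : Tendsto (fun N : ℕ => (m : ℝ) * (((m * N : ℕ) : ℝ)⁻¹ *
      ∑ j ∈ Finset.range (m * N), b j)) atTop (𝓝 0) := by
    have := (h1.comp (tendsto_id.const_mul_atTop' hm)).const_mul (m : ℝ)
    rw [mul_zero] at this
    exact this
  refine squeeze_zero (fun N => by positivity) (fun N => ?_) h2
  have e : (m : ℝ) * (((m * N : ℕ) : ℝ)⁻¹ * ∑ j ∈ Finset.range (m * N), b j) =
      (N : ℝ)⁻¹ * ∑ j ∈ Finset.range (m * N), b j := by
    push_cast
    rw [mul_inv, ← mul_assoc, ← mul_assoc, mul_inv_cancel₀ hm0.ne', one_mul]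
  rw [e]
  refine mul_le_mul_of_nonneg_left ?_ (by positivity)
  have e2 : ∀ j : ℕ, |μ.real ((T^[m])^[j] ⁻¹' A ∩ B) - μ.real A * μ.real B| = b (m * j) := by
    intro j; simp only [hb, Function.iterate_mul]
  simp only [e2]
  rw [← Finset.sum_image (f := b) (g := fun j => m * j)
    (fun x _ y _ hxy => Nat.eq_of_mul_eq_mul_left hm hxy)]
  refine Finset.sum_le_sum_of_subset_of_nonneg ?_ fun _ _ _ => abs_nonneg _
  intro x hx
  simp only [Finset.mem_image, Finset.mem_range] at hx ⊢
  obtain ⟨j, hj, rfl⟩ := hx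
  exact Nat.mul_lt_mul_of_pos_left hj hm

theorem CesaroMixing.of_leftInverse {X : Type*} [MeasurableSpace X] {μ : Measure X}
    {T T' : X → X} (h : CesaroMixing μ T) (hT : MeasurePreserving T μ μ)
    (hT' : Measurable T') (hl : Function.LeftInverse T' T) : CesaroMixing μ T' := by
  intro A B hA hB
  refine (h B A hB hA).congr fun N => ?_
  congr 1
  refine Finset.sum_congr rfl fun j _ => ?_
  have e : T^[j] ⁻¹' (T'^[j] ⁻¹' A ∩ B) = T^[j] ⁻¹' B ∩ A := by
    ext x
    simp [(hl.iterate j) x, and_comm]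
  rw [← e, mul_comm (μ.real B), measureReal_def,
    (hT.iterate j).measure_preimage (((hT'.iterate j) hA).inter hB).nullMeasurableSet]
  rfl

theorem abs_prod_sub_prod_le_sum {ι : Type*} (s : Finset ι) (x y : ι → ℝ)
    (hx0 : ∀ i, 0 ≤ x i) (hx1 : ∀ i, x i ≤ 1) (hy0 : ∀ i, 0 ≤ y i) (hy1 : ∀ i, y i ≤ 1) :
    |∏ i ∈ s, x i - ∏ i ∈ s, y i| ≤ ∑ i ∈ s, |x i - y i| := by
  classical
  induction s using Finset.induction_on with
  | empty => simp
  | insert a s ha ih =>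
    rw [Finset.prod_insert ha, Finset.prod_insert ha, Finset.sum_insert ha]
    have e : x a * ∏ i ∈ s, x i - y a * ∏ i ∈ s, y i =
      (x a - y a) * ∏ i ∈ s, x i + y a * (∏ i ∈ s, x i - ∏ i ∈ s, y i) := by ring
    rw [e]
    refine (abs_add_le _ _).trans (add_le_add ?_ ?_)
    · rw [abs_mul]
      refine mul_le_of_le_one_right (abs_nonneg _) ?_
      rw [abs_of_nonneg (Finset.prod_nonneg fun i _ => hx0 i)]
      exact Finset.prod_le_one (fun i _ => hx0 i) fun i _ => hx1 i
    · rw [abs_mul, abs_of_nonneg (hy0 a)]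
      exact (mul_le_of_le_one_left (abs_nonneg _) (hy1 a)).trans ih

theorem piMap_iterate {ι Y : Type*} (R : ι → Y → Y) (j : ℕ) :
    (Pi.map R)^[j] = Pi.map fun i => (R i)^[j] := by
  induction j with
  | zero => rfl
  | succ j ih => rw [Function.iterate_succ, ih]; rfl

theorem tendsto_cesaro_pi_box {ι Y : Type*} [Fintype ι] [MeasurableSpace Y] {ν : Measure Y}
    [IsProbabilityMeasure ν] {R : ι → Y → Y} (hR : ∀ i, CesaroMixing ν (R i))
    {A B : ι → Set Y} (hA : ∀ i, MeasurableSet (A i)) (hB : ∀ i, MeasurableSet (B i)) :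
    Tendsto (fun N : ℕ => (N : ℝ)⁻¹ * ∑ j ∈ Finset.range N,
      (Measure.pi fun _ : ι => ν).real ((Pi.map R)^[j] ⁻¹' (Set.univ.pi A) ∩ Set.univ.pi B))
      atTop (𝓝 ((Measure.pi fun _ : ι => ν).real (Set.univ.pi A) *
        (Measure.pi fun _ : ι => ν).real (Set.univ.pi B))) := by
  have hbox : ∀ s : ι → Set Y, (Measure.pi fun _ : ι => ν).real (Set.univ.pi s) =
      ∏ i, ν.real (s i) := fun s => by
    simp [measureReal_def, Measure.pi_pi, ENNReal.toReal_prod]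
  have hpre : ∀ j : ℕ, (Pi.map R)^[j] ⁻¹' (Set.univ.pi A) ∩ Set.univ.pi B =
      Set.univ.pi fun i => (R i)^[j] ⁻¹' A i ∩ B i := fun j => by
    rw [piMap_iterate]
    ext x
    simp [Set.mem_pi, forall_and]
  simp only [hpre, hbox, ← Finset.prod_mul_distrib]
  have h0 : Tendsto (fun N : ℕ => ∑ i, (N : ℝ)⁻¹ * ∑ j ∈ Finset.range N,
      |ν.real ((R i)^[j] ⁻¹' A i ∩ B i) - ν.real (A i) * ν.real (B i)|) atTop (𝓝 0) := by
    have := tendsto_finsetSum (Finset.univ : Finset ι)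
      fun i _ => hR i (A i) (B i) (hA i) (hB i)
    simpa using this
  rw [tendsto_iff_norm_sub_tendsto_zero]
  refine squeeze_zero' (Eventually.of_forall fun _ => norm_nonneg _) ?_ h0
  filter_upwards [eventually_ne_atTop 0] with N hN
  have hN' : (N : ℝ) ≠ 0 := by exact_mod_cast hN
  set c : ℝ := ∏ i, ν.real (A i) * ν.real (B i) with hc
  have e : (N : ℝ)⁻¹ * ∑ j ∈ Finset.range N, ∏ i, ν.real ((R i)^[j] ⁻¹' A i ∩ B i) - c =
      (N : ℝ)⁻¹ * ∑ j ∈ Finset.range N, (∏ i, ν.real ((R i)^[j] ⁻¹' A i ∩ B i) - c) := by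
    rw [Finset.sum_sub_distrib, mul_sub]
    simp [hN']
  rw [e, ← Finset.mul_sum, Finset.sum_comm, norm_mul, norm_inv, Real.norm_natCast,
    Real.norm_eq_abs]
  refine mul_le_mul_of_nonneg_left ?_ (by positivity)
  refine (Finset.abs_sum_le_sum_abs _ _).trans (Finset.sum_le_sum fun j _ => ?_)
  exact abs_prod_sub_prod_le_sum _ _ _ (fun i => measureReal_nonneg)
    (fun i => measureReal_le_one) (fun i => by positivity)
    (fun i => mul_le_one₀ measureReal_le_one measureReal_nonneg measureReal_le_one)

theorem tendsto_cesaro_inter_of_piSystem {Z : Type*} [mZ : MeasurableSpace Z] {m : Measure Z}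
    [IsProbabilityMeasure m] {f : Z → Z} (hf : MeasurePreserving f m m) {A : Set Z}
    (hA : MeasurableSet A) {𝒮 : Set (Set Z)} (hgen : mZ = MeasurableSpace.generateFrom 𝒮)
    (hpi : IsPiSystem 𝒮)
    (h : ∀ B ∈ 𝒮, Tendsto (fun N : ℕ => (N : ℝ)⁻¹ * ∑ j ∈ Finset.range N,
      m.real (f^[j] ⁻¹' A ∩ B)) atTop (𝓝 (m.real A * m.real B)))
    {B : Set Z} (hB : MeasurableSet B) :
    Tendsto (fun N : ℕ => (N : ℝ)⁻¹ * ∑ j ∈ Finset.range N,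
      m.real (f^[j] ⁻¹' A ∩ B)) atTop (𝓝 (m.real A * m.real B)) := by
  have hpm : ∀ j : ℕ, MeasurableSet (f^[j] ⁻¹' A) := fun j => (hf.iterate j).measurable hA
  induction B, hB using MeasurableSpace.induction_on_inter hgen hpi with
  | empty => simp
  | basic B hB => exact h B hB
  | compl B hB ih =>
    have := ih.const_sub (m.real A)
    have e : m.real A - m.real A * m.real B = m.real A * m.real Bᶜ := by
      rw [probReal_compl_eq_one_sub hB]; ring
    rw [e] at this
    refine this.congr' ?_
    filter_upwards [eventually_ne_atTop 0] with N hN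
    have hN' : (N : ℝ) ≠ 0 := by exact_mod_cast hN
    have e2 : ∀ j : ℕ, m.real (f^[j] ⁻¹' A ∩ Bᶜ) = m.real A - m.real (f^[j] ⁻¹' A ∩ B) := by
      intro j
      have h1 := measureReal_inter_add_sdiff (μ := m) (s := f^[j] ⁻¹' A) hB
      have h2 : m.real (f^[j] ⁻¹' A) = m.real A := by
        simp only [measureReal_def, (hf.iterate j).measure_preimage hA.nullMeasurableSet]
      rw [← Set.sdiff_eq]
      linarith
    simp only [e2, Finset.sum_sub_distrib, Finset.sum_const, Finset.card_range, nsmul_eq_mul]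
    field_simp
  | iUnion B hd hB ih =>
    have hsum : ∀ C : Set Z, MeasurableSet C →
        HasSum (fun i => m.real (C ∩ B i)) (m.real (C ∩ ⋃ i, B i)) := by
      intro C hC
      rw [Set.inter_iUnion]
      have hdis : Pairwise (Function.onFun Disjoint fun i => C ∩ B i) := fun i j hij =>
        (hd hij).mono Set.inter_subset_right Set.inter_subset_right
      have := measure_iUnion (μ := m) hdis fun i => hC.inter (hB i)
      rw [measureReal_def, this, ENNReal.tsum_toReal_eq fun _ => measure_ne_top _ _]
      exact ENNReal.hasSum_toReal (by rw [← this]; exact measure_ne_top _ _)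
    have hsB : HasSum (fun i => m.real (B i)) (m.real (⋃ i, B i)) := by
      simpa using hsum Set.univ MeasurableSet.univ
    have hlim := tendsto_tsum_of_dominated_convergence (𝓕 := atTop)
      (f := fun (N : ℕ) i => (N : ℝ)⁻¹ * ∑ j ∈ Finset.range N, m.real (f^[j] ⁻¹' A ∩ B i))
      (g := fun i => m.real A * m.real (B i)) (bound := fun i => m.real (B i)) hsB.summable ih
      (Eventually.of_forall fun N i => by
        rcases Nat.eq_zero_or_pos N with rfl | hN
        · simp
        have hN' : (0 : ℝ) < N := by exact_mod_cast hN
        rw [Real.norm_of_nonneg (by positivity), inv_mul_le_iff₀ hN']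
        calc _ ≤ ∑ j ∈ Finset.range N, m.real (B i) :=
              Finset.sum_le_sum fun j _ => measureReal_mono Set.inter_subset_right
          _ = _ := by simp)
    rw [(hsB.mul_left (m.real A)).tsum_eq] at hlim
    refine hlim.congr fun N => ?_
    exact ((hasSum_sum fun j _ => hsum _ (hpm j)).mul_left _).tsum_eq

theorem ergodic_piMap_of_cesaroMixing {ι Y : Type*} [Fintype ι] [MeasurableSpace Y]
    {ν : Measure Y} [IsProbabilityMeasure ν] {R : ι → Y → Y} (hR : ∀ i, CesaroMixing ν (R i))
    (hRm : ∀ i, MeasurePreserving (R i) ν ν) :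
    Ergodic (Pi.map R) (Measure.pi fun _ : ι => ν) := by
  set m : Measure (ι → Y) := Measure.pi fun _ : ι => ν with hm
  have hmp : MeasurePreserving (Pi.map R) m m :=
    measurePreserving_pi (fun _ => ν) (fun _ => ν) hRm
  refine ⟨hmp, ⟨fun D hD hinv => ?_⟩⟩
  set 𝒮 : Set (Set (ι → Y)) := Set.pi Set.univ '' Set.pi Set.univ fun _ => {s | MeasurableSet s}
  have hgen : (MeasurableSpace.pi : MeasurableSpace (ι → Y)) =
    MeasurableSpace.generateFrom 𝒮 := generateFrom_pi.symm
  have hpi : IsPiSystem 𝒮 := isPiSystem_pi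
  have key : ∀ A ∈ 𝒮, m.real (A ∩ D) = m.real A * m.real D := by
    rintro _ ⟨A, hA, rfl⟩
    have hA' : ∀ i, MeasurableSet (A i) := fun i => hA i (Set.mem_univ i)
    have hAm : MeasurableSet (Set.univ.pi A) := MeasurableSet.univ_pi hA'
    have h1 := tendsto_cesaro_inter_of_piSystem hmp hAm hgen hpi (by
      rintro _ ⟨B, hB, rfl⟩
      exact tendsto_cesaro_pi_box hR hA' fun i => hB i (Set.mem_univ i)) hD
    have h2 : ∀ j : ℕ, m.real ((Pi.map R)^[j] ⁻¹' (Set.univ.pi A) ∩ D) =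
        m.real (Set.univ.pi A ∩ D) := by
      intro j
      have hinvj : (Pi.map R)^[j] ⁻¹' D = D := by
        induction j with
        | zero => rfl
        | succ j ih => rw [Function.iterate_succ, Set.preimage_comp, ih, hinv]
      conv_lhs => rw [← hinvj, ← Set.preimage_inter]
      simp only [measureReal_def,
        (hmp.iterate j).measure_preimage (hAm.inter hD).nullMeasurableSet]
    simp only [h2] at h1
    refine tendsto_nhds_unique (Tendsto.congr' ?_ tendsto_const_nhds) h1
    filter_upwards [eventually_ne_atTop 0] with N hN
    have hN' : (N : ℝ) ≠ 0 := by exact_mod_cast hN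
    simp [hN']
  have heq : m.restrict D = m D • m := by
    refine ext_of_generate_finite 𝒮 hgen hpi (fun A hA => ?_) ?_
    · have hAm : MeasurableSet A := by rw [hgen]; exact MeasurableSpace.measurableSet_generateFrom hA
      rw [Measure.restrict_apply hAm, Measure.smul_apply, smul_eq_mul]
      have := key A hA
      simp only [measureReal_def, ← ENNReal.toReal_mul] at this
      rw [(ENNReal.toReal_eq_toReal_iff' (measure_ne_top _ _)
        (ENNReal.mul_ne_top (measure_ne_top _ _) (measure_ne_top _ _))).1 this, mul_comm]
    · simp
  have h0 : m Dᶜ * m D = 0 := by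
    have := congrArg (fun ρ : Measure (ι → Y) => ρ Dᶜ) heq
    simp only [Measure.restrict_apply hD.compl, Set.compl_inter_self, measure_empty,
      Measure.smul_apply, smul_eq_mul] at this
    rw [mul_comm]; exact this.symm
  rw [eventuallyConst_set']
  rcases mul_eq_zero.1 h0 with h | h
  · right
    rw [ae_eq_univ]; exact h
  · left
    exact ae_eq_empty.2 h

theorem measurePreserving_of_leftInverse {Z : Type*} [MeasurableSpace Z] {ρ : Measure Z}
    {f g : Z → Z} (hf : MeasurePreserving f ρ ρ) (hg : Measurable g)
    (hl : Function.LeftInverse g f) : MeasurePreserving g ρ ρ := by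
  refine ⟨hg, ?_⟩
  conv_lhs => rw [← hf.map_eq]
  rw [Measure.map_map hg hf.measurable, hl.comp_eq_id, Measure.map_id]

theorem measurePreserving_zflow {Z : Type*} [MeasurableSpace Z] {ρ : Measure Z}
    {U : ℤ → Z → Z} (hUm : ∀ k, Measurable (U k)) (h0 : U 0 = id)
    (hadd : ∀ a b z, U (a + b) z = U a (U b z)) (h1 : MeasurePreserving (U 1) ρ ρ) (k : ℤ) :
    MeasurePreserving (U k) ρ ρ := by
  have hneg : MeasurePreserving (U (-1)) ρ ρ := by
    refine measurePreserving_of_leftInverse h1 (hUm _) fun z => ?_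
    rw [← hadd]; simp [h0]
  induction k using Int.induction_on with
  | zero => rw [h0]; exact MeasurePreserving.id _
  | succ k ih =>
    have : U (k + 1) = U k ∘ U 1 := funext fun z => hadd _ _ _
    rw [this]; exact ih.comp h1
  | pred k ih =>
    have : U (-k - 1) = U (-k) ∘ U (-1) := funext fun z => hadd _ _ _
    rw [this]; exact ih.comp hneg

/-- A self-joining of `n` copies of a uniquely ergodic weakly mixing system which is invariant
under the diagonal action and an off-diagonal action with distinct speeds is the product one. -/
theorem eq_pi_of_measurePreserving {Y : Type*} [MeasurableSpace Y] {ν : Measure Y}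
    [IsProbabilityMeasure ν] {P : ℤ → Y → Y} (hPm : ∀ k, Measurable (P k)) (h0 : P 0 = id)
    (hadd : ∀ a b y, P (a + b) y = P a (P b y))
    (hu : ∀ ρ : Measure Y, IsProbabilityMeasure ρ → MeasurePreserving (P 1) ρ ρ → ρ = ν)
    (hν : MeasurePreserving (P 1) ν ν) (hmix : ∀ k ≠ 0, CesaroMixing ν (P k)) :
    ∀ (n : ℕ) (e : Fin n → ℤ), Function.Injective e → ∀ ρ : Measure (Fin n → Y),
      IsProbabilityMeasure ρ → MeasurePreserving (Pi.map fun _ => P 1) ρ ρ →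
      MeasurePreserving (Pi.map fun i => P (e i)) ρ ρ → ρ = Measure.pi fun _ => ν := by
  intro n
  induction n with
  | zero =>
    intro e _ ρ hρ _ _
    ext s _
    rcases Subsingleton.set_cases (p := fun s => s = ∅ ∨ s = Set.univ) (Or.inl rfl) (Or.inr rfl) s
      with rfl | rfl <;> simp
  | succ n ih =>
    intro e he ρ hρ hτ hσ
    have hdiag : ∀ k : ℤ, MeasurePreserving (Pi.map fun _ : Fin (n + 1) => P k) ρ ρ :=
      measurePreserving_zflow (U := fun k => Pi.map fun _ => P k)
        (fun k => measurable_pi_lambda _ fun i => (hPm k).comp (measurable_pi_apply i))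
        (by ext x i; simp [h0]) (fun a b x => by ext i; simp [hadd]) hτ
    have hQ : MeasurePreserving (Pi.map fun i : Fin (n + 1) => P (e i - e 0)) ρ ρ := by
      have : (Pi.map fun i : Fin (n + 1) => P (e i - e 0)) =
          (Pi.map fun i => P (e i)) ∘ (Pi.map fun _ => P (-e 0)) := by
        ext x i
        simp [← hadd, sub_eq_add_neg]
      rw [this]; exact hσ.comp (hdiag _)
    set tail : (Fin (n + 1) → Y) → (Fin n → Y) := fun x i => x i.succ with htail
    have htm : Measurable tail := measurable_pi_lambda _ fun i => measurable_pi_apply _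
    have hmapmp : ∀ (g : Fin (n + 1) → Y → Y) (κ κ' : Measure (Fin (n + 1) → Y)),
        (∀ i, Measurable (g i)) → MeasurePreserving (Pi.map g) κ κ' →
        MeasurePreserving (Pi.map fun i : Fin n => g i.succ) (κ.map tail) (κ'.map tail) := by
      intro g κ κ' hg hκ
      refine ⟨measurable_pi_lambda _ fun i => (hg _).comp (measurable_pi_apply i), ?_⟩
      have hm2 : Measurable (Pi.map fun i : Fin n => g i.succ) :=
        measurable_pi_lambda _ fun i => (hg _).comp (measurable_pi_apply i)
      rw [Measure.map_map hm2 htm, ← hκ.map_eq, Measure.map_map htm hκ.measurable]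
      rfl
    have htailρ : ρ.map tail = Measure.pi fun _ => ν :=
      ih (fun i => e i.succ) (fun i j hij => Fin.succ_injective _ (he hij)) _
        (Measure.isProbabilityMeasure_map htm.aemeasurable)
        (hmapmp _ _ _ (fun _ => hPm _) hτ) (hmapmp _ _ _ (fun _ => hPm _) hσ)
    have hzero : ρ.map (fun x => x 0) = ν := by
      refine hu _ (Measure.isProbabilityMeasure_map (measurable_pi_apply _).aemeasurable)
        ⟨hPm 1, ?_⟩
      rw [Measure.map_map (hPm 1) (measurable_pi_apply _)]
      conv_rhs => rw [← hτ.map_eq, Measure.map_map (measurable_pi_apply _) hτ.measurable]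
      rfl
    have herg : Ergodic (Pi.map fun i : Fin n => P (e i.succ - e 0))
        (Measure.pi fun _ : Fin n => ν) :=
      ergodic_piMap_of_cesaroMixing
        (fun i => hmix _ (sub_ne_zero.2 fun h => Fin.succ_ne_zero i (he h)))
        (fun i => measurePreserving_zflow hPm h0 hadd hν _)
    symm
    refine Measure.pi_eq fun A hA => ?_
    set E : Set (Fin (n + 1) → Y) := (fun x => x 0) ⁻¹' A 0 with hE
    have hEm : MeasurableSet E := measurable_pi_apply 0 (hA 0)
    have hQE : (Pi.map fun i : Fin (n + 1) => P (e i - e 0)) ⁻¹' E = E := by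
      ext x; simp [hE, h0]
    have hQr := hQ.restrict_preimage hEm
    rw [hQE] at hQr
    have hinv := hmapmp (fun i => P (e i - e 0)) _ _ (fun _ => hPm _) hQr
    have hac : (ρ.restrict E).map tail ≪ Measure.pi fun _ : Fin n => ν := by
      rw [← htailρ]
      exact (Measure.absolutelyContinuous_of_le Measure.restrict_le_self).map htm
    obtain ⟨c, hc⟩ := herg.eq_smul_of_absolutelyContinuous hinv hac
    have hcv : c = ν (A 0) := by
      have h1 := congrArg (fun κ : Measure (Fin n → Y) => κ Set.univ) hc
      simp only [Measure.map_apply htm MeasurableSet.univ, Set.preimage_univ,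
        Measure.restrict_apply_univ, Measure.smul_apply, measure_univ, smul_eq_mul,
        mul_one] at h1
      rw [← h1, ← hzero, Measure.map_apply (measurable_pi_apply _) (hA 0)]
    have hbox : Set.univ.pi A = tail ⁻¹' (Set.univ.pi fun i => A i.succ) ∩ E := by
      ext x
      simp [htail, hE, Set.mem_pi, Fin.forall_fin_succ, and_comm]
    have hb : MeasurableSet (Set.univ.pi fun i : Fin n => A i.succ) :=
      MeasurableSet.univ_pi fun i => hA _
    rw [hbox, ← Measure.restrict_apply (htm hb), ← Measure.map_apply htm hb, hc,
      Measure.smul_apply, Measure.pi_pi, Fin.prod_univ_succ, hcv, smul_eq_mul]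

/-- The empirical measure of a finite piece of an `ℕ²`-indexed family. -/
noncomputable def empiricalMeasure {Z : Type*} [MeasurableSpace Z] (u : ℕ → ℕ → Z) (N : ℕ) :
    Measure Z :=
  (((N : ENNReal) + 1) * (N + 1))⁻¹ •
    ∑ i ∈ Finset.range (N + 1), ∑ j ∈ Finset.range (N + 1), Measure.dirac (u i j)

theorem isProbabilityMeasure_empiricalMeasure {Z : Type*} [MeasurableSpace Z] (u : ℕ → ℕ → Z)
    (N : ℕ) : IsProbabilityMeasure (empiricalMeasure u N) := by
  constructor
  simp only [empiricalMeasure, Measure.smul_apply, Measure.finsetSum_apply, measure_univ,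
    Finset.sum_const, Finset.card_range, smul_eq_mul, nsmul_eq_mul, mul_one, Nat.cast_add,
    Nat.cast_one]
  refine ENNReal.inv_mul_cancel ?_ ?_
  · simp
  · exact ENNReal.mul_ne_top (by simp) (by simp)

theorem integral_empiricalMeasure {Z : Type*} [MeasurableSpace Z] {u : ℕ → ℕ → Z} {N : ℕ}
    {f : Z → ℝ} (hf : StronglyMeasurable f) :
    ∫ z, f z ∂(empiricalMeasure u N) = (((N : ℝ) + 1) * (N + 1))⁻¹ *
      ∑ i ∈ Finset.range (N + 1), ∑ j ∈ Finset.range (N + 1), f (u i j) := by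
  have hi : ∀ a : Z, Integrable f (Measure.dirac a) := fun a =>
    ⟨hf.aestronglyMeasurable, by
      rw [hasFiniteIntegral_iff_enorm, lintegral_dirac' _ hf.enorm]
      exact enorm_lt_top⟩
  rw [empiricalMeasure, integral_smul_measure, integral_finsetSum_measure]
  · simp_rw [integral_finsetSum_measure fun _ _ => hi _, integral_dirac' _ _ hf]
    congr 1
    rw [ENNReal.toReal_inv, ENNReal.toReal_mul]
    congr 2
  · intro i _
    exact integrable_finsetSum_measure.2 fun _ _ => hi _

theorem tendsto_sum_div_sq {w : ℕ → ℝ} {C : ℝ}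
    (h : ∀ N, |w N| ≤ ((N : ℝ) + 1) * C) :
    Tendsto (fun N : ℕ => (((N : ℝ) + 1) * (N + 1))⁻¹ * w N) atTop (𝓝 0) := by
  refine squeeze_zero_norm (a := fun N : ℕ => C * (1 / ((N : ℝ) + 1))) (fun N => ?_) ?_
  · have hN : (0 : ℝ) < (N : ℝ) + 1 := by positivity
    rw [Real.norm_eq_abs, abs_mul, abs_of_pos (by positivity), inv_mul_le_iff₀ (by positivity)]
    refine (h N).trans (le_of_eq ?_)
    field_simp
  · simpa using (tendsto_one_div_add_atTop_nhds_zero_nat (𝕜 := ℝ)).const_mul C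

/-- **Krylov–Bogoliubov** for two commuting maps, localized on an orbit closure. -/
theorem exists_invariant_measure_orbit_closure {Z : Type*} [TopologicalSpace Z] [CompactSpace Z]
    [TopologicalSpace.MetrizableSpace Z] [MeasurableSpace Z] [BorelSpace Z] {U V : Z → Z}
    (hU : Continuous U) (hV : Continuous V) (hc : Function.Commute U V) (z : Z) :
    ∃ p : Measure Z, IsProbabilityMeasure p ∧ MeasurePreserving U p p ∧ MeasurePreserving V p p ∧
      p (closure (Set.range fun ij : ℕ × ℕ => U^[ij.1] (V^[ij.2] z))) = 1 := by
  let _ : MetricSpace Z := TopologicalSpace.metrizableSpaceMetric Z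
  set u : ℕ → ℕ → Z := fun i j => U^[i] (V^[j] z) with hu
  set m : ℕ → ProbabilityMeasure Z := fun N =>
    ⟨empiricalMeasure u N, isProbabilityMeasure_empiricalMeasure u N⟩ with hm
  obtain ⟨p, -, hp⟩ := isCompact_univ.ultrafilter_le_nhds ((hyperfilter ℕ).map m)
    (by simp)
  have hp' : Tendsto m (hyperfilter ℕ : Filter ℕ) (𝓝 p) := hp
  have hle : (hyperfilter ℕ : Filter ℕ) ≤ atTop := by
    rw [← Nat.cofinite_eq_atTop]; exact hyperfilter_le_cofinite
  have hint := ProbabilityMeasure.tendsto_iff_forall_integral_tendsto.1 hp'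
  have hinv : ∀ W : Z → Z, Continuous W →
      (∀ f : BoundedContinuousFunction Z ℝ, ∃ C : ℝ, ∀ N : ℕ,
        |∑ i ∈ Finset.range (N + 1), ∑ j ∈ Finset.range (N + 1), f (W (u i j)) -
          ∑ i ∈ Finset.range (N + 1), ∑ j ∈ Finset.range (N + 1), f (u i j)| ≤
            ((N : ℝ) + 1) * C) → MeasurePreserving W (p : Measure Z) p := by
    intro W hW h
    refine ⟨hW.measurable, ?_⟩
    have : IsProbabilityMeasure ((p : Measure Z).map W) :=
      Measure.isProbabilityMeasure_map hW.measurable.aemeasurable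
    refine ext_of_forall_integral_eq_of_IsFiniteMeasure fun f => ?_
    rw [integral_map hW.measurable.aemeasurable f.continuous.aestronglyMeasurable]
    have h1 := hint (f.compContinuous ⟨W, hW⟩)
    have h2 := hint f
    have h3 := h1.sub h2
    obtain ⟨C, hC⟩ := h f
    have h4 := (tendsto_sum_div_sq hC).mono_left hle
    have h5 := tendsto_nhds_unique h3 (h4.congr fun N => ?_)
    · simpa [sub_eq_zero] using h5
    · simp only [hm, ProbabilityMeasure.coe_mk]
      rw [integral_empiricalMeasure (BoundedContinuousFunction.continuous _).stronglyMeasurable,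
        integral_empiricalMeasure (BoundedContinuousFunction.continuous _).stronglyMeasurable,
        ← mul_sub]
      rfl
  refine ⟨p, inferInstance, hinv U hU fun f => ⟨2 * ‖f‖, fun N => ?_⟩,
    hinv V hV fun f => ⟨2 * ‖f‖, fun N => ?_⟩, ?_⟩
  · rw [Finset.sum_comm, Finset.sum_comm (f := fun i j => f (u i j)), ← Finset.sum_sub_distrib]
    refine (Finset.abs_sum_le_sum_abs _ _).trans ?_
    refine (Finset.sum_le_card_nsmul _ _ (2 * ‖f‖) fun j _ => ?_).trans (by simp)
    have : ∀ i, f (U (u i j)) = f (u (i + 1) j) := fun i => by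
      simp only [hu, Function.iterate_succ_apply']
    simp_rw [this]
    rw [← Finset.sum_sub_distrib, Finset.sum_range_sub fun i => f (u i j)]
    have := abs_sub (f (u (N + 1) j)) (f (u 0 j))
    have h1 := f.norm_coe_le_norm (u (N + 1) j)
    have h2 := f.norm_coe_le_norm (u 0 j)
    simp only [Real.norm_eq_abs] at h1 h2
    linarith
  · rw [← Finset.sum_sub_distrib]
    refine (Finset.abs_sum_le_sum_abs _ _).trans ?_
    refine (Finset.sum_le_card_nsmul _ _ (2 * ‖f‖) fun i _ => ?_).trans (by simp)
    have : ∀ j, f (V (u i j)) = f (u i (j + 1)) := fun j => by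
      simp only [hu, Function.iterate_succ_apply']
      rw [(hc.iterate_left i).symm.eq]
    simp_rw [this]
    rw [← Finset.sum_sub_distrib, Finset.sum_range_sub fun j => f (u i j)]
    have := abs_sub (f (u i (N + 1))) (f (u i 0))
    have h1 := f.norm_coe_le_norm (u i (N + 1))
    have h2 := f.norm_coe_le_norm (u i 0)
    simp only [Real.norm_eq_abs] at h1 h2
    linarith
  · set C := closure (Set.range fun ij : ℕ × ℕ => U^[ij.1] (V^[ij.2] z)) with hC
    have hCc : IsClosed C := isClosed_closure
    have hlim := ProbabilityMeasure.limsup_measure_closed_le_of_tendsto hp' hCc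
    have hone : ∀ N, (m N : Measure Z) C = 1 := by
      intro N
      have hmem : ∀ i j, u i j ∈ C := fun i j => subset_closure ⟨(i, j), rfl⟩
      have := isProbabilityMeasure_empiricalMeasure u N
      have h0 := measure_univ (μ := empiricalMeasure u N)
      simp only [hm, ProbabilityMeasure.coe_mk]
      rw [← h0]
      simp [empiricalMeasure, Measure.dirac_apply' _ hCc.measurableSet, hmem]
    simp only [hone] at hlim
    have hle1 : (1 : ENNReal) ≤ (p : Measure Z) C := by
      simpa using hlim
    exact le_antisymm prob_le_one hle1

theorem homeo_pow_apply {Y : Type*} [TopologicalSpace Y] (S : Y ≃ₜ Y) (n : ℕ) (y : Y) :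
    (S ^ n : Y ≃ₜ Y) y = S^[n] y := by
  induction n generalizing y with
  | zero => rfl
  | succ n ih => rw [pow_succ, Function.iterate_succ_apply, ← ih]; rfl

theorem homeo_zpow_add_apply {Y : Type*} [TopologicalSpace Y] (S : Y ≃ₜ Y) (a b : ℤ) (y : Y) :
    (S ^ (a + b) : Y ≃ₜ Y) y = (S ^ a : Y ≃ₜ Y) ((S ^ b : Y ≃ₜ Y) y) := by
  rw [zpow_add]; rfl

theorem homeo_iterate_mem_grpOrbit {Y : Type*} [TopologicalSpace Y] {gens : Set (Y ≃ₜ Y)}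
    {U V : Y ≃ₜ Y} (hU : U ∈ gens) (hV : V ∈ gens) (i j : ℕ) (y : Y) :
    U^[i] (V^[j] y) ∈ grpOrbit gens y := by
  refine ⟨U ^ i * V ^ j, mul_mem (pow_mem (Subgroup.subset_closure hU) _)
    (pow_mem (Subgroup.subset_closure hV) _), ?_⟩
  rw [← homeo_pow_apply, ← homeo_pow_apply]; rfl

theorem closure_eq_univ_of_uniquelyErgodic {Z : Type*} [TopologicalSpace Z] [CompactSpace Z]
    [TopologicalSpace.MetrizableSpace Z] [MeasurableSpace Z] [BorelSpace Z] {U V : Z → Z}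
    (hU : Continuous U) (hV : Continuous V) (hc : Function.Commute U V) {ν : Measure Z}
    [IsProbabilityMeasure ν] [ν.IsOpenPosMeasure]
    (hu : ∀ ρ : Measure Z, IsProbabilityMeasure ρ → MeasurePreserving U ρ ρ →
      MeasurePreserving V ρ ρ → ρ = ν) {A : Set Z} {z : Z}
    (hA : ∀ i j : ℕ, U^[i] (V^[j] z) ∈ A) : closure A = Set.univ := by
  obtain ⟨p, hp, hpU, hpV, h1⟩ := exists_invariant_measure_orbit_closure hU hV hc z
  obtain rfl := hu p hp hpU hpV
  refine Set.univ_subset_iff.1 ?_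
  have h2 : closure (Set.range fun ij : ℕ × ℕ => U^[ij.1] (V^[ij.2] z)) = Set.univ := by
    have h3 := (prob_compl_eq_zero_iff isClosed_closure.measurableSet).2 h1
    have h4 := (isClosed_closure.isOpen_compl.measure_eq_zero_iff p).1 h3
    exact Set.compl_empty_iff.1 h4
  rw [← h2]
  refine closure_mono ?_
  rintro _ ⟨ij, rfl⟩
  exact hA _ _

theorem CesaroMixing.zpow {Y : Type*} [TopologicalSpace Y] [MeasurableSpace Y] [BorelSpace Y]
    {ν : Measure Y} {S : Y ≃ₜ Y} (h : CesaroMixing ν S) (hS : MeasurePreserving S ν ν) {k : ℤ}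
    (hk : k ≠ 0) : CesaroMixing ν (S ^ k : Y ≃ₜ Y) := by
  have hpow : ∀ n : ℕ, ((S ^ n : Y ≃ₜ Y) : Y → Y) = S^[n] := fun n =>
    funext (homeo_pow_apply S n)
  obtain ⟨n, rfl | rfl⟩ := k.eq_nat_or_neg
  · rw [zpow_natCast, hpow]
    exact h.iterate (by omega)
  · have h1 : CesaroMixing ν (S ^ n : Y ≃ₜ Y) := by
      rw [hpow]; exact h.iterate (by omega)
    refine h1.of_leftInverse (by rw [hpow]; exact hS.iterate n)
      (S ^ (-(n : ℤ)) : Y ≃ₜ Y).continuous.measurable fun y => ?_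
    rw [← zpow_natCast, ← homeo_zpow_add_apply]; simp

/-- A uniquely ergodic weakly mixing homeomorphism whose invariant measure has full support is
minimal, and its arithmetic progression systems are strictly ergodic. -/
theorem strictlyErgodic_of_uniquelyErgodic {Y : Type*} [TopologicalSpace Y] [CompactSpace Y]
    [TopologicalSpace.MetrizableSpace Y] [MeasurableSpace Y] [BorelSpace Y] {S : Y ≃ₜ Y}
    {ν : Measure Y} [IsProbabilityMeasure ν] [ν.IsOpenPosMeasure] (hS : MeasurePreserving S ν ν)
    (hu : ∀ ρ : Measure Y, IsProbabilityMeasure ρ → MeasurePreserving S ρ ρ → ρ = ν)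
    (hmix : CesaroMixing ν S) (d : ℕ) :
    StrictlyErgodicHomeo S ∧ ∀ y : Y, StrictlyErgodicOn (apGens S d)
      (closure (grpOrbit (apGens S d) (fun _ : Fin d => y))) := by
  have hsc : SecondCountableTopology Y := by
    let _ : MetricSpace Y := TopologicalSpace.metrizableSpaceMetric Y
    infer_instance
  refine ⟨⟨fun y => ?_, ν, ⟨inferInstance, hS⟩, fun ρ hρ => hu ρ hρ.1 hρ.2⟩, fun y => ?_⟩
  · rw [dense_iff_closure_eq]
    refine closure_eq_univ_of_uniquelyErgodic (z := y) S.continuous continuous_id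
      Function.Commute.id_right (ν := ν) (fun ρ h1 h2 _ => hu ρ h1 h2) fun i j => ⟨i, ?_⟩
    simp [homeo_pow_apply]
  · set m : Measure (Fin d → Y) := Measure.pi fun _ => ν with hm
    have hmixk : ∀ k : ℤ, k ≠ 0 → CesaroMixing ν (S ^ k : Y ≃ₜ Y) := fun k hk => hmix.zpow hS hk
    have hflow := measurePreserving_zflow (ρ := ν) (U := fun k : ℤ => ((S ^ k : Y ≃ₜ Y) : Y → Y))
      (fun k => (S ^ k : Y ≃ₜ Y).continuous.measurable) rfl
      (homeo_zpow_add_apply S) (by rw [zpow_one]; exact hS)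
    have huniq : ∀ ρ : Measure (Fin d → Y), IsProbabilityMeasure ρ →
        MeasurePreserving (tauHomeo S d) ρ ρ → MeasurePreserving (sigmaHomeo S d) ρ ρ → ρ = m := by
      intro ρ hρ h1 h2
      refine eq_pi_of_measurePreserving (P := fun k : ℤ => ((S ^ k : Y ≃ₜ Y) : Y → Y))
        (fun k => (S ^ k : Y ≃ₜ Y).continuous.measurable) rfl
        (homeo_zpow_add_apply S) (by rw [zpow_one]; exact hu) (by rw [zpow_one]; exact hS)
        hmixk d (fun i => ((i : ℕ) : ℤ) + 1) (fun i j hij => Fin.ext (by simpa using hij)) ρ hρ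
        ?_ ?_
      · convert h1 using 1
        ext x i
        simp [tauHomeo]
      · convert h2 using 1
        ext x i
        exact congrArg (fun g : Y ≃ₜ Y => g (x i)) (zpow_natCast S ((i : ℕ) + 1))
    have hcomm : Function.Commute (tauHomeo S d) (sigmaHomeo S d) := by
      intro x
      funext i
      show S ((S ^ ((i : ℕ) + 1) : Y ≃ₜ Y) (x i)) = (S ^ ((i : ℕ) + 1) : Y ≃ₜ Y) (S (x i))
      rw [homeo_pow_apply, homeo_pow_apply, ← Function.iterate_succ_apply' (⇑S),
        Function.iterate_succ_apply]
    have htau : MeasurePreserving (tauHomeo S d) m m :=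
      measurePreserving_pi (fun _ => ν) (fun _ => ν) fun _ => hS
    have hsig : MeasurePreserving (sigmaHomeo S d) m m :=
      measurePreserving_pi (fun _ => ν) (fun _ => ν) fun i : Fin d => by
        have := hflow (((i : ℕ) + 1 : ℕ) : ℤ)
        rwa [zpow_natCast] at this
    have horb : ∀ x : Fin d → Y, closure (grpOrbit (apGens S d) x) = Set.univ := fun x =>
      closure_eq_univ_of_uniquelyErgodic (tauHomeo S d).continuous (sigmaHomeo S d).continuous
        hcomm huniq fun i j => homeo_iterate_mem_grpOrbit (by simp [apGens]) (by simp [apGens]) _ _ _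
    rw [horb]
    refine ⟨fun x _ => horb x, m, ⟨inferInstance, measure_univ, ?_⟩, ?_⟩
    · rintro g (rfl | rfl)
      exacts [htau, hsig]
    · rintro ρ ⟨h1, -, h2⟩
      exact huniq ρ h1 (h2 _ (by simp [apGens])) (h2 _ (by simp [apGens]))

theorem exists_measurableSet_measure_lt {X : Type*} [MeasurableSpace X] [StandardBorelSpace X]
    {μ : Measure X} [IsProbabilityMeasure μ] [NullSingletonClass μ] {ε : ENNReal} (hε : 0 < ε) :
    ∃ A, MeasurableSet A ∧ 0 < μ A ∧ μ A < ε := by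
  by_contra! h
  let _ := upgradeStandardBorel X
  have h0 : μ Set.univ = 0 := by
    refine measure_null_of_locally_null _ fun x _ => ?_
    obtain ⟨U, hU, hUo, hUε⟩ := Set.exists_isOpen_lt_of_lt (μ := μ) {x} ε (by simpa using hε)
    refine ⟨U, by simpa using hUo.mem_nhds (hU rfl), ?_⟩
    by_contra h1
    exact absurd (h U hUo.measurableSet (pos_iff_ne_zero.2 h1)) (not_le.2 hUε)
  simp at h0

theorem exists_separated_set {X : Type*} [MeasurableSpace X] {μ : Measure X}
    [IsProbabilityMeasure μ] {f : X → X} (hf : Ergodic f μ)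
    (hsmall : ∀ ε : ENNReal, 0 < ε → ∃ A, MeasurableSet A ∧ 0 < μ A ∧ μ A < ε) (L : ℕ) :
    ∃ C, MeasurableSet C ∧ 0 < μ C ∧ ∀ x ∈ C, ∀ i, 0 < i → i < L → f^[i] x ∉ C := by
  obtain ⟨A, hA, hA0, hAL⟩ := hsmall ((L : ENNReal) + 1)⁻¹ (by simp)
  have hfm := hf.measurable
  set D : Set X := ⋃ i ∈ Finset.range L, f^[i + 1] ⁻¹' A with hD
  have hDm : MeasurableSet D :=
    Finset.measurableSet_biUnion _ fun i _ => (hfm.iterate _) hA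
  refine ⟨A \ D, hA.diff hDm, ?_, ?_⟩
  · by_contra h0
    have h0 : μ (A \ D) = 0 := by simpa using h0
    set U : Set X := ⋃ i ∈ Finset.range (L + 1), f^[i] ⁻¹' A with hU
    have hUm : MeasurableSet U := Finset.measurableSet_biUnion _ fun i _ => (hfm.iterate _) hA
    have hDU : D ⊆ f ⁻¹' U := by
      intro x hx
      simp only [hD, Set.mem_iUnion, Finset.mem_range, Set.mem_preimage] at hx
      obtain ⟨i, hi, hx⟩ := hx
      simp only [hU, Set.mem_iUnion, Finset.mem_range, Set.mem_preimage]
      exact ⟨i, by omega, by simpa using hx⟩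
    have hUD : U ⊆ A ∪ D := by
      intro x hx
      simp only [hU, Set.mem_iUnion, Finset.mem_range, Set.mem_preimage] at hx
      obtain ⟨i, hi, hx⟩ := hx
      rcases i with _ | i
      · exact Or.inl hx
      · refine Or.inr ?_
        simp only [hD, Set.mem_iUnion, Finset.mem_range, Set.mem_preimage]
        exact ⟨i, by omega, hx⟩
    have hle : U ≤ᵐ[μ] f ⁻¹' U := by
      have h1 : ∀ᵐ x ∂μ, x ∉ A \ D := measure_eq_zero_iff_ae_notMem.1 h0
      filter_upwards [h1] with x hx hxU
      rcases hUD hxU with h | h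
      · exact hDU (by_contra fun h' => hx ⟨h, h'⟩)
      · exact hDU h
    have hUlt : μ U < 1 := by
      calc μ U ≤ ∑ i ∈ Finset.range (L + 1), μ (f^[i] ⁻¹' A) :=
            measure_biUnion_finset_le _ _
        _ = ((L : ENNReal) + 1) * μ A := by
            simp [(hf.toMeasurePreserving.iterate _).measure_preimage hA.nullMeasurableSet]
        _ < ((L : ENNReal) + 1) * ((L : ENNReal) + 1)⁻¹ := by
            refine ENNReal.mul_lt_mul_right (by simp) (by simp) hAL
        _ = 1 := ENNReal.mul_inv_cancel (by simp) (by simp)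
    have hAU : A ⊆ U := by
      intro x hx
      simp only [hU, Set.mem_iUnion, Finset.mem_range, Set.mem_preimage]
      exact ⟨0, by omega, hx⟩
    rcases hf.ae_empty_or_univ_of_ae_le_preimage hUm.nullMeasurableSet hle with h | h
    · have := measure_mono (μ := μ) hAU
      rw [measure_congr h] at this
      simp at this
      exact hA0.ne' this
    · rw [measure_congr h] at hUlt
      simp at hUlt
  · rintro x ⟨-, hx⟩ i hi0 hiL ⟨hi, -⟩
    refine hx ?_
    simp only [hD, Set.mem_iUnion, Finset.mem_range, Set.mem_preimage]
    exact ⟨i - 1, by omega, by rwa [Nat.sub_add_cancel hi0]⟩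

/-- The set of points whose first entrance time to `C` is a multiple of `L`. -/
def entranceDvd {X : Type*} (f : X → X) (C : Set X) (L m : ℕ) : Set X :=
  {x | ∃ k, L ∣ k + m ∧ f^[k] x ∈ C ∧ ∀ j < k, f^[j] x ∉ C}

theorem measurableSet_entranceDvd {X : Type*} [MeasurableSpace X] {f : X → X} (hf : Measurable f)
    {C : Set X} (hC : MeasurableSet C) (L m : ℕ) : MeasurableSet (entranceDvd f C L m) := by
  have : entranceDvd f C L m = ⋃ k : ℕ, ⋃ _ : L ∣ k + m,
      (f^[k] ⁻¹' C ∩ ⋂ j : ℕ, ⋂ _ : j < k, (f^[j] ⁻¹' C)ᶜ) := by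
    ext x; simp [entranceDvd, and_left_comm]
  rw [this]
  exact MeasurableSet.iUnion fun k => MeasurableSet.iUnion fun _ => ((hf.iterate k) hC).inter
    (MeasurableSet.iInter fun j => MeasurableSet.iInter fun _ => ((hf.iterate j) hC).compl)

theorem exists_first_visit {X : Type*} {f : X → X} {C : Set X} {x : X}
    (h : ∃ k, f^[k] x ∈ C) : ∃ k, f^[k] x ∈ C ∧ ∀ j < k, f^[j] x ∉ C := by
  classical
  exact ⟨Nat.find h, Nat.find_spec h, fun j hj => Nat.find_min h hj⟩

/-- From a separated set one obtains a nearly `L`-periodic set of markers. -/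
theorem exists_markers_of_separated {X : Type*} [MeasurableSpace X] {f : X → X}
    (hf : Measurable f) {C : Set X} (hC : MeasurableSet C) {L : ℕ} (hL : 0 < L)
    (hsep : ∀ x ∈ C, ∀ i, 0 < i → i < L → f^[i] x ∉ C) :
    ∃ M, MeasurableSet M ∧
      (∀ x, (∃ᶠ n in atTop, f^[n] x ∈ C) → ∃ i < 2 * L, f^[i] x ∈ M) ∧
      ∀ x ∈ M, ∀ i, 0 < i → i < L → f^[i] x ∉ M := by
  refine ⟨entranceDvd f C L 0 ∩ f ⁻¹' entranceDvd f C L 1,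
    (measurableSet_entranceDvd hf hC L 0).inter (hf (measurableSet_entranceDvd hf hC L 1)), ?_, ?_⟩
  · have key : ∀ x a, L ≤ a → f^[a] x ∈ C → (∀ j, 0 < j → j < a → f^[j] x ∉ C) →
        ∃ i < L, f^[i] x ∈ entranceDvd f C L 0 ∩ f ⁻¹' entranceDvd f C L 1 := by
      intro x a ha hxa hj
      have hmod := Nat.mod_lt a hL
      have hdiv := Nat.div_add_mod a L
      have hq : L * 1 ≤ L * (a / L) := Nat.mul_le_mul_left _ ((Nat.one_le_div_iff hL).2 ha)
      refine ⟨a % L, hmod, ?_, ?_⟩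
      · by_cases hx0 : a % L = 0 ∧ x ∈ C
        · rw [hx0.1]
          exact ⟨0, by simp, hx0.2, by simp⟩
        · refine ⟨L * (a / L), by simp, ?_, fun j hjl => ?_⟩
          · rwa [← Function.iterate_add_apply, hdiv]
          · rw [← Function.iterate_add_apply]
            rcases Nat.eq_zero_or_pos (j + a % L) with h0 | h0
            · rw [h0]; exact fun h => hx0 ⟨by omega, h⟩
            · exact hj _ h0 (by omega)
      · refine ⟨L * (a / L) - 1, ?_, ?_, fun j hjl => ?_⟩
        · rw [Nat.sub_add_cancel (by omega)]; simp
        · rw [← Function.iterate_succ_apply, ← Function.iterate_add_apply]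
          rwa [show (L * (a / L) - 1).succ + a % L = a by omega]
        · rw [← Function.iterate_succ_apply, ← Function.iterate_add_apply]
          exact hj _ (by omega) (by omega)
    have hnext : ∀ x, (∃ᶠ n in atTop, f^[n] x ∈ C) →
        ∃ a, 0 < a ∧ f^[a] x ∈ C ∧ ∀ j, 0 < j → j < a → f^[j] x ∉ C := by
      intro x hx
      obtain ⟨n, hn, hnC⟩ := frequently_atTop.1 hx 1
      obtain ⟨k, hk, hkm⟩ := exists_first_visit (f := f) (C := C) (x := f x)
        ⟨n - 1, by rwa [← Function.iterate_succ_apply, Nat.succ_eq_add_one, Nat.sub_add_cancel hn]⟩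
      refine ⟨k + 1, by omega, hk, fun j hj0 hjk => ?_⟩
      have := hkm (j - 1) (by omega)
      rwa [← Function.iterate_succ_apply, Nat.succ_eq_add_one, Nat.sub_add_cancel hj0] at this
    intro x hx
    obtain ⟨a, ha0, haC, haj⟩ := hnext x hx
    rcases le_or_gt L a with hLa | hLa
    · obtain ⟨i, hi, h⟩ := key x a hLa haC haj
      exact ⟨i, by omega, h⟩
    · have hx' : ∃ᶠ n in atTop, f^[n] (f^[a] x) ∈ C := by
        rw [← map_add_atTop_eq_nat a, frequently_map] at hx
        simpa [Function.iterate_add_apply] using hx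
      obtain ⟨b, hb0, hbC, hbj⟩ := hnext _ hx'
      have hLb : L ≤ b := by
        by_contra! h
        exact hsep _ haC b hb0 h hbC
      obtain ⟨i, hi, h⟩ := key _ b hLb hbC hbj
      exact ⟨i + a, by omega, by rwa [Function.iterate_add_apply]⟩
  · rintro x ⟨-, k, hk, hkC, hkj⟩ i hi0 hiL ⟨⟨l, hl, hlC, hlj⟩, -⟩
    have hkL := Nat.le_of_dvd (by omega) hk
    have h1 : l + i = k + 1 := by
      rw [← Function.iterate_add_apply] at hlC
      rcases lt_trichotomy (l + i) (k + 1) with h | h | h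
      · refine absurd ?_ (hkj (l + i - 1) (by omega))
        rwa [← Function.iterate_succ_apply, show (l + i - 1).succ = l + i by omega]
      · exact h
      · refine absurd ?_ (hlj (k + 1 - i) (by omega))
        rw [← Function.iterate_add_apply, show k + 1 - i + i = k.succ by omega]
        exact hkC
    rw [← h1] at hk
    have h2 := (Nat.dvd_add_right (by simpa using hl)).1 hk
    exact absurd (Nat.le_of_dvd hi0 h2) (by omega)

theorem exists_markers {X : Type*} [MeasurableSpace X] {μ : Measure X}
    [IsProbabilityMeasure μ] {f : X → X} (hf : Ergodic f μ)
    (hsmall : ∀ ε : ENNReal, 0 < ε → ∃ A, MeasurableSet A ∧ 0 < μ A ∧ μ A < ε) :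
    ∃ R, MeasurableSet R ∧ f ⁻¹' R = R ∧ μ R = 1 ∧ ∀ L, 0 < L → ∃ M, MeasurableSet M ∧
      (∀ x ∈ R, ∃ i < 2 * L, f^[i] x ∈ M) ∧ ∀ x ∈ M, ∀ i, 0 < i → i < L → f^[i] x ∉ M := by
  choose C hC hC0 hsep using exists_separated_set hf hsmall
  have hfm := hf.measurable
  set V : ℕ → Set X := fun L => {x | ∃ᶠ n in atTop, f^[n] x ∈ C L} with hV
  have hVm : ∀ L, MeasurableSet (V L) := by
    intro L
    have : V L = ⋂ a : ℕ, ⋃ b : ℕ, ⋃ _ : a ≤ b, f^[b] ⁻¹' C L := by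
      ext x; simp [hV, frequently_atTop]
    rw [this]
    exact MeasurableSet.iInter fun a => MeasurableSet.iUnion fun b => MeasurableSet.iUnion
      fun _ => (hfm.iterate b) (hC L)
  have hVi : ∀ L, f ⁻¹' V L = V L := by
    intro L
    ext x
    simp only [hV, Set.mem_preimage, Set.mem_ofPred_eq, ← Function.iterate_succ_apply]
    conv_rhs => rw [← map_add_atTop_eq_nat 1, frequently_map]
  have hV1 : ∀ L, μ (V L) = 1 := by
    intro L
    refine (hf.prob_eq_zero_or_one (hVm L) (hVi L)).resolve_left fun h0 => ?_
    have h1 := hf.toMeasurePreserving.conservative.ae_mem_imp_frequently_image_mem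
      (hC L).nullMeasurableSet
    have h2 : ∀ᵐ x ∂μ, x ∉ V L := measure_eq_zero_iff_ae_notMem.1 h0
    have h3 : ∀ᵐ x ∂μ, x ∉ C L := by
      filter_upwards [h1, h2] with x hx hx' hxC using hx' (hx hxC)
    exact (hC0 L).ne' (measure_eq_zero_iff_ae_notMem.2 h3)
  refine ⟨⋂ L, V L, MeasurableSet.iInter hVm, ?_, ?_, fun L hL => ?_⟩
  · simp [Set.preimage_iInter, hVi]
  · rw [← prob_compl_eq_zero_iff (MeasurableSet.iInter hVm), Set.compl_iInter,
      measure_iUnion_null_iff]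
    exact fun L => (prob_compl_eq_zero_iff (hVm L)).2 (hV1 L)
  · obtain ⟨M, hM, h1, h2⟩ := exists_markers_of_separated hfm (hC L) hL (hsep L)
    exact ⟨M, hM, fun x hx => h1 x (Set.mem_iInter.1 hx L), h2⟩

/-- Every orbit segment of length `H` visits `B`. -/
def GapBound {X : Type*} (f : X → X) (B : Set X) (H : ℕ) : Prop :=
  ∀ x, ∃ i < H, f^[i] x ∈ B

/-- Returns to `B` take at least `n` steps. -/
def Separated {X : Type*} (f : X → X) (B : Set X) (n : ℕ) : Prop :=
  ∀ x ∈ B, ∀ i, 0 < i → i < n → f^[i] x ∉ B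

/-- There are everywhere defined marker sets at all scales. -/
def HasMarkers {X : Type*} [MeasurableSpace X] (f : X → X) : Prop :=
  ∀ L, 0 < L → ∃ M, MeasurableSet M ∧ GapBound f M (2 * L) ∧ Separated f M L

theorem HasMarkers.exists_subset {X : Type*} [MeasurableSpace X] {f : X → X}
    (hMK : HasMarkers f) (hf : Measurable f) {B : Set X} (hB : MeasurableSet B) {H : ℕ}
    (hgap : GapBound f B H) (n : ℕ) :
    ∃ B' ⊆ B, MeasurableSet B' ∧ (∃ H', GapBound f B' H') ∧ Separated f B' n := by
  classical
  rcases isEmpty_or_nonempty X with hX | ⟨⟨x₀⟩⟩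
  · exact ⟨B, subset_rfl, hB, ⟨H, hgap⟩, fun x => isEmptyElim x⟩
  have hH : 0 < H := by
    obtain ⟨i, hi, -⟩ := hgap x₀; omega
  obtain ⟨M, hM, hMg, hMs⟩ := hMK (n + H) (by omega)
  have hmeas : MeasurableSet {x | x ∈ B ∧ ∃ j < H, f^[j] x ∈ M ∧
      ∀ i, 0 < i → i ≤ j → f^[i] x ∉ B} := by
    have : {x | x ∈ B ∧ ∃ j < H, f^[j] x ∈ M ∧ ∀ i, 0 < i → i ≤ j → f^[i] x ∉ B} =
        B ∩ ⋃ j : ℕ, ⋃ _ : j < H, (f^[j] ⁻¹' M ∩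
          ⋂ i : ℕ, ⋂ _ : 0 < i, ⋂ _ : i ≤ j, (f^[i] ⁻¹' B)ᶜ) := by
      ext x; simp [and_left_comm]
    rw [this]
    exact hB.inter (MeasurableSet.iUnion fun j => MeasurableSet.iUnion fun _ =>
      ((hf.iterate j) hM).inter (MeasurableSet.iInter fun i => MeasurableSet.iInter fun _ =>
        MeasurableSet.iInter fun _ => ((hf.iterate i) hB).compl))
  refine ⟨_, fun x hx => hx.1, hmeas, ⟨H + 2 * (n + H), fun x => ?_⟩, ?_⟩
  · obtain ⟨i, hi, hiB⟩ := hgap x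
    obtain ⟨k, hk, hkM⟩ := hMg (f^[i] x)
    rw [← Function.iterate_add_apply] at hkM
    set t := Nat.findGreatest (fun t => f^[t] x ∈ B) (k + i) with ht
    have htB : f^[t] x ∈ B :=
      Nat.findGreatest_spec (P := fun t => f^[t] x ∈ B) (m := i) (by omega) hiB
    have htle : t ≤ k + i := Nat.findGreatest_le _
    have htgt : ∀ s, t < s → s ≤ k + i → f^[s] x ∉ B := fun s h1 h2 =>
      Nat.findGreatest_is_greatest h1 h2
    refine ⟨t, by omega, htB, k + i - t, ?_, ?_, fun s hs0 hs => ?_⟩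
    · by_contra! h
      obtain ⟨s, hs, hsB⟩ := hgap (f^[t + 1] x)
      rw [← Function.iterate_add_apply] at hsB
      exact htgt _ (by omega) (by omega) hsB
    · rwa [← Function.iterate_add_apply, Nat.sub_add_cancel htle]
    · rw [← Function.iterate_add_apply]
      exact htgt _ (by omega) (by omega)
  · rintro x ⟨hxB, j, hj, hjM, hjB⟩ i hi0 hin ⟨hyB, j', hj', hjM', -⟩
    rw [← Function.iterate_add_apply] at hjM'
    have hji : j < i := by
      by_contra! h
      exact hjB i hi0 h hyB
    refine hMs _ hjM (j' + i - j) (by omega) (by omega) ?_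
    rwa [← Function.iterate_add_apply, Nat.sub_add_cancel (by omega)]

theorem Separated.mul_measureReal_le {X : Type*} [MeasurableSpace X] {μ : Measure X}
    [IsProbabilityMeasure μ] {f : X → X} (hf : MeasurePreserving f μ μ) {B : Set X}
    (hB : MeasurableSet B) {n : ℕ} (h : Separated f B n) : n * μ.real B ≤ 1 := by
  have hd : Set.PairwiseDisjoint (Finset.range n : Set ℕ) fun i => f^[i] ⁻¹' B := by
    have key : ∀ i j, i < j → j < n → Disjoint (f^[i] ⁻¹' B) (f^[j] ⁻¹' B) := by
      intro i j hij hj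
      rw [Set.disjoint_left]
      intro x hx hx'
      refine h _ hx (j - i) (by omega) (by omega) ?_
      rw [← Function.iterate_add_apply, Nat.sub_add_cancel hij.le]
      exact hx'
    intro i hi j hj hij
    simp only [Finset.coe_range, Set.mem_Iio] at hi hj
    rcases lt_or_gt_of_ne hij with h1 | h1
    exacts [key i j h1 hj, (key j i h1 hi).symm]
  have h1 := measureReal_biUnion_finset (μ := μ) hd fun i _ => (hf.measurable.iterate i) hB
  simp only [(hf.iterate _).measureReal_preimage hB.nullMeasurableSet, Finset.sum_const,
    Finset.card_range, nsmul_eq_mul] at h1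
  rw [← h1]
  exact measureReal_le_one

/-- The return time to `B`. -/
noncomputable def returnTime {X : Type*} (f : X → X) (B : Set X) (x : X) : ℕ :=
  sInf {i | 0 < i ∧ f^[i] x ∈ B}

/-- The time since the last visit to `B`. -/
noncomputable def age {X : Type*} [MeasurableSpace X] (T : X ≃ᵐ X) (B : Set X) (x : X) : ℕ :=
  sInf {i | T.symm^[i] x ∈ B}

/-- The last point of `B` visited. -/
noncomputable def basePt {X : Type*} [MeasurableSpace X] (T : X ≃ᵐ X) (B : Set X) (x : X) : X :=
  T.symm^[age T B x] x

namespace GapBound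

variable {X : Type*} {f : X → X} {B : Set X} {H : ℕ}

theorem returnTime_spec (h : GapBound f B H) (x : X) :
    0 < returnTime f B x ∧ f^[returnTime f B x] x ∈ B ∧ returnTime f B x ≤ H := by
  obtain ⟨i, hi, hiB⟩ := h (f x)
  have hmem : i + 1 ∈ {i | 0 < i ∧ f^[i] x ∈ B} := ⟨by omega, hiB⟩
  have h1 := Nat.sInf_mem ⟨_, hmem⟩
  exact ⟨h1.1, h1.2, (Nat.sInf_le hmem).trans hi⟩

theorem notMem_of_lt_returnTime {x : X} {i : ℕ} (h0 : 0 < i) (hi : i < returnTime f B x) :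
    f^[i] x ∉ B := fun hB => Nat.notMem_of_lt_sInf hi ⟨h0, hB⟩

theorem returnTime_eq {x : X} {k : ℕ} (h0 : 0 < k) (hk : f^[k] x ∈ B)
    (hj : ∀ j, 0 < j → j < k → f^[j] x ∉ B) : returnTime f B x = k := by
  refine le_antisymm (Nat.sInf_le ⟨h0, hk⟩) (le_csInf ⟨k, h0, hk⟩ fun j hjB => ?_)
  by_contra! hlt
  exact hj j hjB.1 hlt hjB.2

theorem _root_.HSY.Separated.le_returnTime (h : GapBound f B H) {n : ℕ} (hs : Separated f B n)
    {x : X} (hx : x ∈ B) : n ≤ returnTime f B x := by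
  by_contra! hlt
  exact hs x hx _ (h.returnTime_spec x).1 hlt (h.returnTime_spec x).2.1

variable [MeasurableSpace X]

theorem measurable_returnTime (h : GapBound f B H) (hf : Measurable f) (hB : MeasurableSet B) :
    Measurable (returnTime f B) := by
  refine measurable_to_countable' fun k => ?_
  rcases Nat.eq_zero_or_pos k with rfl | hk
  · convert MeasurableSet.empty (α := X)
    ext x
    simpa using (h.returnTime_spec x).1.ne'
  · have : returnTime f B ⁻¹' {k} = f^[k] ⁻¹' B ∩
        ⋂ i : ℕ, ⋂ _ : 0 < i, ⋂ _ : i < k, (f^[i] ⁻¹' B)ᶜ := by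
      ext x
      simp only [Set.mem_preimage, Set.mem_singleton_iff, Set.mem_inter_iff, Set.mem_iInter,
        Set.mem_compl_iff]
      refine ⟨?_, fun hx => returnTime_eq hk hx.1 hx.2⟩
      rintro rfl
      exact ⟨(h.returnTime_spec x).2.1, fun i h0 hi => notMem_of_lt_returnTime h0 hi⟩
    rw [this]
    exact ((hf.iterate k) hB).inter (MeasurableSet.iInter fun i => MeasurableSet.iInter fun _ =>
        MeasurableSet.iInter fun _ => ((hf.iterate i) hB).compl)

variable {T : X ≃ᵐ X}

theorem iterate_symm_iterate (T : X ≃ᵐ X) (n : ℕ) (x : X) : T^[n] (T.symm^[n] x) = x :=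
  (Function.LeftInverse.iterate T.apply_symm_apply n) x

theorem symm_iterate_iterate (T : X ≃ᵐ X) (n : ℕ) (x : X) : T.symm^[n] (T^[n] x) = x :=
  (Function.LeftInverse.iterate T.symm_apply_apply n) x

theorem age_spec (h : GapBound T B H) (x : X) : basePt T B x ∈ B ∧ age T B x < H := by
  obtain ⟨i, hi, hiB⟩ := h (T.symm^[H - 1] x)
  have hmem : H - 1 - i ∈ {i | T.symm^[i] x ∈ B} := by
    have h1 : H - 1 = i + (H - 1 - i) := by omega
    rw [h1, Function.iterate_add_apply, iterate_symm_iterate] at hiB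
    exact hiB
  exact ⟨Nat.sInf_mem ⟨_, hmem⟩, (Nat.sInf_le hmem).trans_lt (by omega)⟩

theorem iterate_age_basePt (x : X) : T^[age T B x] (basePt T B x) = x :=
  iterate_symm_iterate T _ x

theorem age_eq {y : X} (hy : y ∈ B) {i : ℕ} (hj : ∀ j, 0 < j → j ≤ i → T^[j] y ∉ B) :
    age T B (T^[i] y) = i := by
  have hi : i ∈ {k | T.symm^[k] (T^[i] y) ∈ B} := by
    rw [Set.mem_ofPred_eq, symm_iterate_iterate]; exact hy
  refine le_antisymm (Nat.sInf_le hi) (le_csInf ⟨i, hi⟩ fun j hjB => ?_)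
  · by_contra! hlt
    refine hj (i - j) (by omega) (by omega) ?_
    have h1 : i = j + (i - j) := by omega
    rw [Set.mem_ofPred_eq, h1, Function.iterate_add_apply, symm_iterate_iterate] at hjB
    exact hjB

theorem basePt_eq {y : X} (hy : y ∈ B) {i : ℕ} (hj : ∀ j, 0 < j → j ≤ i → T^[j] y ∉ B) :
    basePt T B (T^[i] y) = y := by
  rw [basePt, age_eq hy hj, symm_iterate_iterate]

theorem age_lt_returnTime (h : GapBound T B H) (x : X) :
    age T B x < returnTime T B (basePt T B x) := by
  by_contra! hle
  obtain ⟨h0, hB, -⟩ := h.returnTime_spec (basePt T B x)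
  have hx : T^[age T B x - returnTime T B (basePt T B x)]
      (T^[returnTime T B (basePt T B x)] (basePt T B x)) = x := by
    rw [← Function.iterate_add_apply, Nat.sub_add_cancel hle, iterate_age_basePt]
  have h2 : age T B x ≤ age T B x - returnTime T B (basePt T B x) := by
    refine Nat.sInf_le ?_
    have h3 : T.symm^[age T B x - returnTime T B (basePt T B x)] x =
        T^[returnTime T B (basePt T B x)] (basePt T B x) := by
      have h4 := congrArg T.symm^[age T B x - returnTime T B (basePt T B x)] hx
      rw [symm_iterate_iterate] at h4
      exact h4.symm
    rw [Set.mem_ofPred_eq, h3]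
    exact hB
  omega

theorem basePt_iterate {y : X} (hy : y ∈ B) {i : ℕ} (hi : i < returnTime T B y) :
    basePt T B (T^[i] y) = y :=
  basePt_eq hy fun _ h0 hj => notMem_of_lt_returnTime h0 (hj.trans_lt hi)

theorem age_iterate {y : X} (hy : y ∈ B) {i : ℕ} (hi : i < returnTime T B y) :
    age T B (T^[i] y) = i :=
  age_eq hy fun _ h0 hj => notMem_of_lt_returnTime h0 (hj.trans_lt hi)

theorem step_of_notMem (h : GapBound T B H) {x : X} (hx : T x ∉ B) :
    basePt T B (T x) = basePt T B x ∧ age T B (T x) = age T B x + 1 := by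
  have h1 := h.age_lt_returnTime x
  have h2 : T^[age T B x + 1] (basePt T B x) = T x := by
    rw [Function.iterate_succ_apply', iterate_age_basePt]
  have h3 : age T B x + 1 < returnTime T B (basePt T B x) := by
    refine lt_of_le_of_ne h1 fun h4 => hx ?_
    rw [← h2, h4]
    exact (h.returnTime_spec _).2.1
  constructor
  · conv_lhs => rw [← h2]
    exact basePt_iterate (h.age_spec x).1 h3
  · conv_lhs => rw [← h2]
    exact age_iterate (h.age_spec x).1 h3

theorem of_mem {x : X} (hx : x ∈ B) : basePt T B x = x ∧ age T B x = 0 :=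
  ⟨basePt_eq (i := 0) hx (by intros; omega), age_eq (i := 0) hx (by intros; omega)⟩

theorem step_of_mem (h : GapBound T B H) {x : X} (hx : T x ∈ B) :
    returnTime T B (basePt T B x) = age T B x + 1 := by
  have h1 := h.age_lt_returnTime x
  refine returnTime_eq (by omega) ?_ fun j h0 hj => notMem_of_lt_returnTime h0 (by omega)
  rwa [Function.iterate_succ_apply', iterate_age_basePt]

theorem measurable_age (h : GapBound T B H) (hB : MeasurableSet B) : Measurable (age T B) := by
  refine measurable_to_countable' fun k => ?_
  have : age T B ⁻¹' {k} = T.symm^[k] ⁻¹' B ∩ ⋂ i : ℕ, ⋂ _ : i < k, (T.symm^[i] ⁻¹' B)ᶜ := by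
    ext x
    simp only [Set.mem_preimage, Set.mem_singleton_iff, Set.mem_inter_iff, Set.mem_iInter,
      Set.mem_compl_iff]
    constructor
    · rintro rfl
      exact ⟨(h.age_spec x).1, fun i hi hiB => Nat.notMem_of_lt_sInf hi hiB⟩
    · rintro ⟨h1, h2⟩
      refine le_antisymm (Nat.sInf_le h1) (le_csInf ⟨k, h1⟩ fun j hj => ?_)
      by_contra! hlt
      exact h2 j hlt hj
  rw [this]
  exact ((T.symm.measurable.iterate k) hB).inter (MeasurableSet.iInter fun i =>
    MeasurableSet.iInter fun _ => ((T.symm.measurable.iterate i) hB).compl)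

theorem measurable_basePt (h : GapBound T B H) (hB : MeasurableSet B) :
    Measurable (basePt T B) := by
  have h1 : Measurable fun p : ℕ × X => T.symm^[p.1] p.2 :=
    measurable_from_prod_countable_right fun n => T.symm.measurable.iterate n
  exact h1.comp ((h.measurable_age hB).prodMk measurable_id)

end GapBound

theorem setIntegral_basePt_nonneg {X : Type*} [MeasurableSpace X] {μ : Measure X}
    {T : X ≃ᵐ X} (hT : MeasurePreserving T μ μ) {B : Set X} {H : ℕ} (h : GapBound T B H)
    (hB : MeasurableSet B) {A : Set X} (hA : MeasurableSet A) (hAB : A ⊆ B) {J : X → ℝ}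
    (hJ : Integrable J μ)
    (hsum : ∀ y ∈ A, 0 ≤ ∑ i ∈ Finset.range (returnTime T B y), J (T^[i] y)) :
    0 ≤ ∫ x in basePt T B ⁻¹' A, J x ∂μ := by
  classical
  set D : ℕ → Set X := fun i => basePt T B ⁻¹' A ∩ age T B ⁻¹' {i} with hD
  have hDm : ∀ i, MeasurableSet (D i) := fun i =>
    (h.measurable_basePt hB hA).inter (h.measurable_age hB (measurableSet_singleton i))
  have hAm : MeasurableSet (basePt T B ⁻¹' A) := h.measurable_basePt hB hA
  have hint : ∀ i, Integrable ((D i).indicator J) μ := fun i => hJ.indicator (hDm i)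
  have hcomp : ∀ i, ∫ y, (D i).indicator J (T^[i] y) ∂μ = ∫ x, (D i).indicator J x ∂μ := by
    intro i
    have h1 := (hT.iterate i).map_eq
    conv_rhs => rw [← h1]
    rw [integral_map (hT.iterate i).measurable.aemeasurable]
    rw [h1]; exact (hint i).aestronglyMeasurable
  have hmem : ∀ i y, T^[i] y ∈ D i ↔ y ∈ A ∧ i < returnTime T B y := by
    intro i y
    constructor
    · rintro ⟨h1, h2⟩
      have h2 : age T B (T^[i] y) = i := h2
      have h3 : basePt T B (T^[i] y) = y := by
        rw [basePt, h2, GapBound.symm_iterate_iterate]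
      have h4 := h.age_lt_returnTime (T^[i] y)
      rw [h2, h3] at h4
      exact ⟨h3 ▸ h1, h4⟩
    · rintro ⟨h1, h2⟩
      refine ⟨?_, GapBound.age_iterate (hAB h1) h2⟩
      rw [Set.mem_preimage, GapBound.basePt_iterate (hAB h1) h2]
      exact h1
  have hsplit : ∀ x, (basePt T B ⁻¹' A).indicator J x =
      ∑ i ∈ Finset.range H, (D i).indicator J x := by
    intro x
    rw [Finset.sum_eq_single (age T B x)]
    · by_cases hx : x ∈ basePt T B ⁻¹' A
      · have hx' : x ∈ D (age T B x) := ⟨hx, rfl⟩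
        rw [Set.indicator_of_mem hx, Set.indicator_of_mem hx']
      · rw [Set.indicator_of_notMem hx, Set.indicator_of_notMem fun h' => hx h'.1]
    · intro i _ hi
      exact Set.indicator_of_notMem (fun h' => hi (Eq.symm h'.2)) _
    · intro h'
      exact absurd (Finset.mem_range.2 (h.age_spec x).2) h'
  rw [← integral_indicator hAm]
  simp_rw [hsplit]
  rw [integral_finsetSum _ fun i _ => hint i]
  simp_rw [← hcomp]
  have hint' : ∀ i, Integrable (fun y => (D i).indicator J (T^[i] y)) μ := fun i =>
    (hT.iterate i).integrable_comp_of_integrable (hint i)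
  rw [← integral_finsetSum _ fun i _ => hint' i]
  refine integral_nonneg fun y => ?_
  by_cases hy : y ∈ A
  · have h1 : ∑ i ∈ Finset.range H, (D i).indicator J (T^[i] y) =
        ∑ i ∈ Finset.range (returnTime T B y), J (T^[i] y) := by
      rw [← Finset.sum_subset (Finset.range_mono (h.returnTime_spec y).2.2)]
      · refine Finset.sum_congr rfl fun i hi => ?_
        exact Set.indicator_of_mem ((hmem i y).2 ⟨hy, Finset.mem_range.1 hi⟩) _
      · intro i _ hi
        exact Set.indicator_of_notMem (fun h' => hi (Finset.mem_range.2 ((hmem i y).1 h').2)) _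
    rw [Pi.zero_apply, h1]
    exact hsum y hy
  · refine (Finset.sum_eq_zero fun i _ => ?_).ge
    exact Set.indicator_of_notMem (fun h' => hy ((hmem i y).1 h').1) _

theorem abs_sum_average_sub_le {u : ℕ → ℝ} (h0 : ∀ i, 0 ≤ u i) (h1 : ∀ i, u i ≤ 1) {n : ℕ}
    (hn : 0 < n) (r : ℕ) :
    |∑ i ∈ Finset.range r, (n : ℝ)⁻¹ * ∑ k ∈ Finset.range n, u (k + i) -
      ∑ i ∈ Finset.range r, u i| ≤ n := by
  have hn' : (0 : ℝ) < n := by exact_mod_cast hn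
  have hk : ∀ k ∈ Finset.range n,
      |∑ i ∈ Finset.range r, u (k + i) - ∑ i ∈ Finset.range r, u i| ≤ (n : ℝ) := by
    intro k hk
    have hkn : (k : ℝ) ≤ n := by exact_mod_cast (Finset.mem_range.1 hk).le
    have e1 := Finset.sum_range_add u k r
    have e2 := Finset.sum_range_add u r k
    rw [add_comm r k] at e2
    have b : ∀ v : ℕ → ℝ, (∀ i, 0 ≤ v i) → (∀ i, v i ≤ 1) →
        0 ≤ ∑ i ∈ Finset.range k, v i ∧ ∑ i ∈ Finset.range k, v i ≤ k := fun v hv0 hv1 =>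
      ⟨Finset.sum_nonneg fun i _ => hv0 i,
        (Finset.sum_le_sum fun i _ => hv1 i).trans (by simp)⟩
    have b1 := b u h0 h1
    have b2 := b (fun i => u (r + i)) (fun _ => h0 _) (fun _ => h1 _)
    rw [abs_le]
    constructor <;> linarith [b1.1, b1.2, b2.1, b2.2]
  have e : ∑ i ∈ Finset.range r, (n : ℝ)⁻¹ * ∑ k ∈ Finset.range n, u (k + i) -
      ∑ i ∈ Finset.range r, u i = (n : ℝ)⁻¹ * ∑ k ∈ Finset.range n,
        (∑ i ∈ Finset.range r, u (k + i) - ∑ i ∈ Finset.range r, u i) := by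
    rw [← Finset.mul_sum, Finset.sum_comm, Finset.sum_sub_distrib, mul_sub]
    congr 1
    simp only [Finset.sum_const, Finset.card_range, nsmul_eq_mul]
    field_simp
  rw [e, abs_mul, abs_inv, Nat.abs_cast, inv_mul_le_iff₀ hn']
  refine (Finset.abs_sum_le_sum_abs _ _).trans ((Finset.sum_le_sum hk).trans ?_)
  simp

/-- The points of `B` whose column has a bad average for one of the test functions. -/
def badBase {X : Type*} [MeasurableSpace X] (μ : Measure X) (T : X → X) (B : Set X)
    {ι : Type*} (g : ι → X → ℝ) (δ : ℝ) : Set X :=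
  {b | b ∈ B ∧ ∃ j, δ * returnTime T B b <
    |∑ i ∈ Finset.range (returnTime T B b), (g j (T^[i] b) - ∫ x, g j x ∂μ)|}

theorem measurableSet_badBase {X : Type*} [MeasurableSpace X] {μ : Measure X} {f : X → X}
    (hf : Measurable f) {B : Set X} {H : ℕ} (h : GapBound f B H) (hB : MeasurableSet B)
    {ι : Type*} [Countable ι] {g : ι → X → ℝ} (hg : ∀ j, Measurable (g j)) (δ : ℝ) :
    MeasurableSet (badBase μ f B g δ) := by
  have hr := h.measurable_returnTime hf hB
  have : badBase μ f B g δ = B ∩ ⋃ j, {b | δ * returnTime f B b <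
      |∑ i ∈ Finset.range (returnTime f B b), (g j (f^[i] b) - ∫ x, g j x ∂μ)|} := by
    ext x; simp [badBase]
  rw [this]
  refine hB.inter (MeasurableSet.iUnion fun j => measurableSet_lt ?_ ?_)
  · exact (measurable_from_top.comp hr).const_mul δ
  · have h1 : Measurable fun p : ℕ × X =>
        ∑ i ∈ Finset.range p.1, (g j (f^[i] p.2) - ∫ x, g j x ∂μ) :=
      measurable_from_prod_countable_right fun n => by
        refine Finset.measurable_sum (Finset.range n) fun i _ => ?_
        exact ((hg j).comp (hf.iterate i)).sub_const _
    exact continuous_abs.measurable.comp (h1.comp (hr.prodMk measurable_id))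

theorem exists_forall_measure_badBase_lt {X : Type*} [MeasurableSpace X] {μ : Measure X}
    [IsProbabilityMeasure μ] {T : X ≃ᵐ X} (hT : Ergodic T μ) {ι : Type*} [Fintype ι]
    {g : ι → X → ℝ} (hg : ∀ j, Measurable (g j)) (hg0 : ∀ j x, 0 ≤ g j x)
    (hg1 : ∀ j x, g j x ≤ 1) {δ η : ℝ} (hδ : 0 < δ) (hη : 0 < η) :
    ∃ n₀ : ℕ, ∀ (B : Set X) (H : ℕ), MeasurableSet B → GapBound T B H → Separated T B n₀ →
      μ.real (basePt T B ⁻¹' badBase μ T B g δ) < η := by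
  have hmp := hT.toMeasurePreserving
  have habs : ∀ j x, |g j x| ≤ 1 := fun j x => abs_le.2 ⟨by linarith [hg0 j x], hg1 j x⟩
  set c : ι → ℝ := fun j => ∫ x, g j x ∂μ with hc
  have hlim : Tendsto (fun n => ∑ j, ∫ x, |birkhoffAverage ℝ T (g j) n x - c j| ∂μ) atTop
      (𝓝 0) := by
    have := tendsto_finsetSum (Finset.univ : Finset ι) fun j _ =>
      tendsto_integral_abs_birkhoffAverage_sub hT (hg j) (habs j)
    simpa using this
  obtain ⟨n, hnlt, hn0⟩ := ((hlim.eventually (gt_mem_nhds (show 0 < δ / 2 * η by positivity))).and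
    (eventually_gt_atTop 0)).exists
  set G : X → ℝ := fun x => ∑ j, |birkhoffAverage ℝ T (g j) n x - c j| with hG
  have hGi : ∀ j, Integrable (fun x => |birkhoffAverage ℝ T (g j) n x - c j|) μ := by
    intro j
    refine Integrable.of_bound (C := 1 + |c j|) ?_ (ae_of_all _ fun x => ?_)
    · exact (continuous_abs.measurable.comp
        ((measurable_birkhoffAverage T.measurable (hg j) n).sub_const _)).aestronglyMeasurable
    · rw [Real.norm_eq_abs, abs_abs]
      have h1 := abs_birkhoffAverage_le (f := T) (habs j) zero_le_one n x
      have h2 := abs_sub (birkhoffAverage ℝ T (g j) n x) (c j)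
      linarith
  have hGint : Integrable G μ := integrable_finsetSum _ fun j _ => hGi j
  have hG0 : ∀ x, 0 ≤ G x := fun x => Finset.sum_nonneg fun j _ => abs_nonneg _
  have hGlt : ∫ x, G x ∂μ < δ / 2 * η := by
    rw [hG, integral_finsetSum _ fun j _ => hGi j]; exact hnlt
  obtain ⟨n₀, hn₀⟩ := exists_nat_ge (2 * n / δ)
  refine ⟨n₀, fun B H hB hgap hsep => ?_⟩
  set A := badBase μ T B g δ with hA
  have hAm : MeasurableSet A := measurableSet_badBase T.measurable hgap hB hg δ
  have hbm : MeasurableSet (basePt T B ⁻¹' A) := hgap.measurable_basePt hB hAm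
  have key : 0 ≤ ∫ x in basePt T B ⁻¹' A, (G x - δ / 2) ∂μ := by
    refine setIntegral_basePt_nonneg hmp hgap hB hAm (fun x hx => hx.1)
      (hGint.sub (integrable_const _)) fun y hy => ?_
    obtain ⟨hyB, j, hj⟩ := hy
    set r := returnTime T B y with hr
    have hrn : (n : ℝ) ≤ δ / 2 * r := by
      have h1 : (n₀ : ℝ) ≤ r := by exact_mod_cast hsep.le_returnTime hgap hyB
      have h2 := hn₀.trans h1
      rw [div_le_iff₀ hδ] at h2
      linarith
    have hav := abs_sum_average_sub_le (u := fun i => g j (T^[i] y)) (fun _ => hg0 _ _)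
      (fun _ => hg1 _ _) hn0 r
    have hA1 : ∀ i, (n : ℝ)⁻¹ * ∑ k ∈ Finset.range n, g j (T^[k + i] y) =
        birkhoffAverage ℝ T (g j) n (T^[i] y) := by
      intro i
      simp [birkhoffAverage, birkhoffSum, Function.iterate_add_apply]
    simp only [hA1] at hav
    have hsumG : |∑ i ∈ Finset.range r, (birkhoffAverage ℝ T (g j) n (T^[i] y) - c j)| ≤
        ∑ i ∈ Finset.range r, G (T^[i] y) := by
      refine (Finset.abs_sum_le_sum_abs _ _).trans (Finset.sum_le_sum fun i _ => ?_)
      exact Finset.single_le_sum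
        (f := fun j => |birkhoffAverage ℝ T (g j) n (T^[i] y) - c j|)
        (fun j _ => abs_nonneg _) (Finset.mem_univ j)
    rw [Finset.sum_sub_distrib] at hsumG hj ⊢
    simp only [Finset.sum_const, Finset.card_range, nsmul_eq_mul] at hsumG hj ⊢
    have e : ∑ i ∈ Finset.range r, g j (T^[i] y) - (r : ℝ) * c j =
        (∑ i ∈ Finset.range r, birkhoffAverage ℝ T (g j) n (T^[i] y) - r * c j) -
        (∑ i ∈ Finset.range r, birkhoffAverage ℝ T (g j) n (T^[i] y) -
          ∑ i ∈ Finset.range r, g j (T^[i] y)) := by ring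
    have h3 := abs_sub (∑ i ∈ Finset.range r, birkhoffAverage ℝ T (g j) n (T^[i] y) - r * c j)
      (∑ i ∈ Finset.range r, birkhoffAverage ℝ T (g j) n (T^[i] y) -
          ∑ i ∈ Finset.range r, g j (T^[i] y))
    rw [← e] at h3
    linarith
  rw [integral_sub hGint.integrableOn (integrable_const _).integrableOn] at key
  simp only [integral_const, MeasurableSet.univ, measureReal_restrict_apply, Set.univ_inter,
    smul_eq_mul] at key
  have h4 : ∫ x in basePt T B ⁻¹' A, G x ∂μ ≤ ∫ x, G x ∂μ :=
    setIntegral_le_integral hGint (ae_of_all _ hG0)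
  have h5 : δ / 2 * μ.real (basePt T B ⁻¹' A) < δ / 2 * η := by linarith
  exact lt_of_mul_lt_mul_left h5 (by positivity)

/-- A sequence which follows the dynamics except for jumps from preimages of `B` into `B`. -/
def IsPseudoOrbit {X : Type*} (f : X → X) (B : Set X) (z : ℕ → X) : Prop :=
  ∀ n, z (n + 1) = f (z n) ∨ (f (z n) ∈ B ∧ z (n + 1) ∈ B)

/-- A pseudo-orbit of length `r` which starts in `B` and is about to return to `B`. -/
structure IsWord {X : Type*} (f : X → X) (B : Set X) (r : ℕ) (ζ : ℕ → X) : Prop where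
  pos : 0 < r
  zero_mem : ζ 0 ∈ B
  step : ∀ i, i + 1 < r → ζ (i + 1) = f (ζ i) ∨ (f (ζ i) ∈ B ∧ ζ (i + 1) ∈ B)
  last : f (ζ (r - 1)) ∈ B

/-- There is a word of length `r` along which the averages deviate by at most `e`. -/
def GoodWord {X : Type*} (f : X → X) (B : Set X) {ι : Type*} (u : ι → X → ℝ) (r : ℕ) (e : ℝ) :
    Prop :=
  ∃ ζ, IsWord f B r ζ ∧ ∀ j, |∑ i ∈ Finset.range r, u j (ζ i)| ≤ e

theorem isWord_orbit {X : Type*} {f : X → X} {B : Set X} {r : ℕ} (hr : 0 < r) {y : X}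
    (hy : y ∈ B) (hy' : f^[r] y ∈ B) : IsWord f B r fun i => f^[i] y where
  pos := hr
  zero_mem := hy
  step i _ := Or.inl (Function.iterate_succ_apply' f i y)
  last := by rwa [← Function.iterate_succ_apply' f, Nat.succ_eq_add_one, Nat.sub_add_cancel hr]

theorem GoodWord.add {X : Type*} {f : X → X} {B : Set X} {ι : Type*} {u : ι → X → ℝ} {r s : ℕ}
    {e d : ℝ} (h : GoodWord f B u r e) (h' : GoodWord f B u s d) :
    GoodWord f B u (r + s) (e + d) := by
  obtain ⟨ζ, hζ, h1⟩ := h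
  obtain ⟨ξ, hξ, h2⟩ := h'
  have hr := hζ.pos
  have hs := hξ.pos
  have e1 : ∀ i, i < r → (if i < r then ζ i else ξ (i - r)) = ζ i := fun i hi => if_pos hi
  have e2 : ∀ i, (if r + i < r then ζ (r + i) else ξ (r + i - r)) = ξ i := fun i => by simp
  refine ⟨fun i => if i < r then ζ i else ξ (i - r), ⟨by omega, ?_, fun i hi => ?_, ?_⟩,
    fun j => ?_⟩
  · simp only [e1 0 hr]; exact hζ.zero_mem
  · rcases lt_trichotomy (i + 1) r with h | h | h
    · simp only [e1 _ h, e1 i (by omega)]; exact hζ.step i h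
    · right
      have h3 := e2 0
      simp only [add_zero] at h3
      simp only [h, h3, e1 i (by omega)]
      refine ⟨?_, hξ.zero_mem⟩
      have := hζ.last
      rwa [← h, Nat.add_sub_cancel] at this
    · obtain ⟨k, hk⟩ := Nat.exists_eq_add_of_lt h
      obtain rfl : i = r + k := by omega
      simp only [e2 k, show r + k + 1 = r + (k + 1) by omega, e2 (k + 1)]
      exact hξ.step k (by omega)
  · have h3 := e2 (s - 1)
    simp only [show r + s - 1 = r + (s - 1) by omega, h3]
    exact hξ.last
  · rw [Finset.sum_range_add]
    have h3 : ∑ i ∈ Finset.range r, u j (if i < r then ζ i else ξ (i - r)) =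
        ∑ i ∈ Finset.range r, u j (ζ i) :=
      Finset.sum_congr rfl fun i hi => by rw [e1 i (Finset.mem_range.1 hi)]
    simp only [h3, e2]
    exact (abs_add_le _ _).trans (add_le_add (h1 j) (h2 j))

theorem abs_sum_le_of_abs_le_one {u : ℕ → ℝ} (hu : ∀ i, |u i| ≤ 1) (n : ℕ) :
    |∑ i ∈ Finset.range n, u i| ≤ n :=
  (Finset.abs_sum_le_sum_abs _ _).trans ((Finset.sum_le_sum fun i _ => hu i).trans (by simp))

theorem exists_goodWord {X : Type*} {f : X → X} {B : Set X} {ι : Type*} {u : ι → X → ℝ}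
    (hu : ∀ j x, |u j x| ≤ 1) {ε : ℝ} (hε : 0 < ε) {s : ℕ} (hv : GoodWord f B u s (ε / 2 * s)) :
    ∃ R : ℕ, ∀ r, R ≤ r → (∃ y ∈ B, f^[r] y ∈ B) → GoodWord f B u r (ε * r) := by
  classical
  have hs : 0 < s := by obtain ⟨ζ, hζ, -⟩ := hv; exact hζ.pos
  have hk : ∀ c : ℕ, ∃ k : ℕ, ∀ r, 0 < r → (∃ y ∈ B, f^[r] y ∈ B) → r % s = c →
      ∃ ρ, 0 < ρ ∧ ρ ≤ k ∧ ρ % s = c ∧ ∃ y ∈ B, f^[ρ] y ∈ B := by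
    intro c
    by_cases hc : ∃ ρ, 0 < ρ ∧ ρ % s = c ∧ ∃ y ∈ B, f^[ρ] y ∈ B
    · obtain ⟨ρ, h0, h1, h2⟩ := hc
      exact ⟨ρ, fun r _ _ _ => ⟨ρ, h0, le_rfl, h1, h2⟩⟩
    · exact ⟨0, fun r h0 h2 h1 => absurd ⟨r, h0, h1, h2⟩ hc⟩
  choose k hk using hk
  set K := (Finset.range s).sup k with hK
  obtain ⟨R, hR⟩ := exists_nat_ge (K / (ε / 2))
  rw [div_le_iff₀ (by positivity)] at hR
  have hiter : ∀ (a ρ : ℕ) (e : ℝ), GoodWord f B u ρ e →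
      GoodWord f B u (a * s + ρ) (ε / 2 * (a * s : ℕ) + e) := by
    intro a ρ e h
    induction a with
    | zero => simpa using h
    | succ a ih =>
      have := hv.add ih
      convert this using 1
      · ring
      · push_cast; ring
  refine ⟨max R (K + 1), fun r hr hy => ?_⟩
  have hr1 : R ≤ r := (le_max_left _ _).trans hr
  have hr2 : K + 1 ≤ r := (le_max_right _ _).trans hr
  obtain ⟨ρ, h0, h1, h2, y, hyB, hyr⟩ := hk (r % s) r (by omega) hy rfl
  have hρK : ρ ≤ K :=
    h1.trans (Finset.le_sup (f := k) (Finset.mem_range.2 (Nat.mod_lt r hs)))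
  have hgood : GoodWord f B u ρ ρ :=
    ⟨_, isWord_orbit h0 hyB hyr, fun j => abs_sum_le_of_abs_le_one (fun i => hu j _) ρ⟩
  obtain ⟨a, ha⟩ : s ∣ r - ρ := (Nat.modEq_iff_dvd' (by omega)).1 h2
  have hra : r = a * s + ρ := by rw [mul_comm] at ha; omega
  obtain ⟨ζ, hζ, hζ'⟩ := hiter a ρ ρ hgood
  rw [← hra] at hζ hζ'
  refine ⟨ζ, hζ, fun j => (hζ' j).trans ?_⟩
  have e1 : ((a * s : ℕ) : ℝ) ≤ r := by exact_mod_cast (by omega : a * s ≤ r)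
  have e2 : (ρ : ℝ) ≤ K := by exact_mod_cast hρK
  have e3 : (R : ℝ) ≤ r := by exact_mod_cast hr1
  have e4 := mul_le_mul_of_nonneg_left e1 (by positivity : 0 ≤ ε / 2)
  have e5 := mul_le_mul_of_nonneg_right e3 (by positivity : 0 ≤ ε / 2)
  linarith

/-- A bounded sequence which splits into blocks of bounded length with small sums has small
averages. -/
theorem abs_sum_le_of_blocks {w : ℕ → ℝ} (hw : ∀ n, |w n| ≤ 1) {P : ℕ → Prop} {H : ℕ} {ε : ℝ}
    (hε : 0 ≤ ε)
    (h : ∀ t, P t → ∃ r, 0 < r ∧ r ≤ H ∧ P (t + r) ∧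
      |∑ i ∈ Finset.range r, w (t + i)| ≤ ε * r) (N : ℕ) :
    ∀ t, P t → |∑ n ∈ Finset.range N, w (t + n)| ≤ ε * N + H := by
  induction N using Nat.strong_induction_on with
  | _ N ih =>
    intro t ht
    obtain ⟨r, hr0, hrH, hPr, hsum⟩ := h t ht
    rcases lt_or_ge N r with hN | hN
    · have h1 := abs_sum_le_of_abs_le_one (fun i => hw (t + i)) N
      have h2 : (N : ℝ) ≤ H := by exact_mod_cast (by omega : N ≤ H)
      have h3 : 0 ≤ ε * N := by positivity
      linarith
    · obtain ⟨m, rfl⟩ := Nat.exists_eq_add_of_le hN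
      rw [Finset.sum_range_add]
      have h1 := ih m (by omega) (t + r) hPr
      simp only [add_assoc] at h1
      refine (abs_add_le _ _).trans ((add_le_add hsum h1).trans (le_of_eq ?_))
      push_cast; ring

theorem IsPseudoOrbit.apply_add {X : Type*} {f : X → X} {B : Set X} {H : ℕ}
    (h : GapBound f B H) {z : ℕ → X} (hz : IsPseudoOrbit f B z) (t : ℕ) :
    (∀ i < returnTime f B (z t), z (t + i) = f^[i] (z t)) ∧
      z (t + returnTime f B (z t)) ∈ B := by
  have h1 : ∀ i < returnTime f B (z t), z (t + i) = f^[i] (z t) := by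
    intro i hi
    induction i with
    | zero => rfl
    | succ i ih =>
      have h2 := ih (by omega)
      rcases hz (t + i) with h3 | h3
      · rw [Function.iterate_succ_apply', ← h2, ← h3]; rfl
      · refine absurd h3.1 ?_
        rw [h2, ← Function.iterate_succ_apply' f]
        exact GapBound.notMem_of_lt_returnTime (by omega) hi
  refine ⟨h1, ?_⟩
  obtain ⟨h0, hB, -⟩ := h.returnTime_spec (z t)
  obtain ⟨k, hk⟩ : ∃ k, returnTime f B (z t) = k + 1 := ⟨_, (Nat.sub_add_cancel h0).symm⟩
  rw [hk] at h1 hB ⊢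
  rcases hz (t + k) with h3 | h3
  · rw [← add_assoc, h3, h1 k (by omega), ← Function.iterate_succ_apply' f]
    exact hB
  · exact h3.2

/-- One stage of the construction of a uniformly ergodic model: a small modification `π` of the
identity, compatible with pseudo-orbits, that makes the averages of finitely many test functions
uniformly close to their integrals. -/
theorem exists_stage {X : Type*} [MeasurableSpace X] {μ : Measure X} [IsProbabilityMeasure μ]
    {T : X ≃ᵐ X} (hT : Ergodic T μ) (hMK : HasMarkers T) {B : Set X} (hB : MeasurableSet B)
    {H : ℕ} (hgap : GapBound T B H) {ι : Type*} [Fintype ι] {g : ι → X → ℝ}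
    (hg : ∀ j, Measurable (g j)) (hg0 : ∀ j x, 0 ≤ g j x) (hg1 : ∀ j x, g j x ≤ 1) {ε δ : ℝ}
    (hε : 0 < ε) (hδ : 0 < δ) :
    ∃ (B' : Set X) (π : X → X), MeasurableSet B' ∧ (∃ H', GapBound T B' H') ∧ Measurable π ∧
      (∀ z, IsPseudoOrbit T B' z → IsPseudoOrbit T B (π ∘ z)) ∧
      μ.real {x | π x ≠ x} < ε ∧ μ.real B' ≤ δ ∧
      ∃ N₀ : ℕ, ∀ N ≥ N₀, ∀ z, IsPseudoOrbit T B' z → ∀ j,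
        |∑ n ∈ Finset.range N, (g j (π (z n)) - ∫ x, g j x ∂μ)| ≤ ε * N := by
  classical
  have hTm := T.measurable
  set u : ι → X → ℝ := fun j x => g j x - ∫ x, g j x ∂μ with hu
  have hu1 : ∀ j x, |u j x| ≤ 1 := by
    intro j x
    have h0 : 0 ≤ ∫ x, g j x ∂μ := integral_nonneg fun x => hg0 j x
    have h1 : ∫ x, g j x ∂μ ≤ 1 := by
      refine (integral_mono_of_nonneg (ae_of_all _ fun x => hg0 j x) (integrable_const 1)
        (ae_of_all _ fun x => hg1 j x)).trans (by simp)
    rw [abs_le]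
    constructor <;> simp only [hu] <;> linarith [hg0 j x, hg1 j x]
  -- a word with good averages
  obtain ⟨s, hs⟩ : ∃ s, GoodWord T B u s (ε / 2 / 2 * s) := by
    obtain ⟨n₁, hn₁⟩ := exists_forall_measure_badBase_lt hT hg hg0 hg1
      (show 0 < ε / 2 / 2 by positivity) one_pos
    obtain ⟨B₁, hB₁B, hB₁, ⟨H₁, hgap₁⟩, hsep₁⟩ := hMK.exists_subset hTm hB hgap n₁
    have h1 := hn₁ B₁ H₁ hB₁ hgap₁ hsep₁
    obtain ⟨x, hx⟩ : ∃ x, x ∉ basePt T B₁ ⁻¹' badBase μ T B₁ g (ε / 2 / 2) := by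
      by_contra! hall
      rw [Set.eq_univ_of_forall hall] at h1
      simp at h1
    have hbB := (hgap₁.age_spec x).1
    obtain ⟨h0, hrB, -⟩ := hgap₁.returnTime_spec (basePt T B₁ x)
    refine ⟨_, _, isWord_orbit h0 (hB₁B hbB) (hB₁B hrB), fun j => ?_⟩
    by_contra! hlt
    exact hx ⟨hbB, j, hlt⟩
  obtain ⟨R, hR⟩ := exists_goodWord hu1 (show 0 < ε / 2 by positivity) hs
  -- the new base
  obtain ⟨n₂, hn₂⟩ := exists_forall_measure_badBase_lt hT hg hg0 hg1
    (show 0 < ε / 2 by positivity) hε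
  obtain ⟨n₃, hn₃⟩ := exists_nat_ge (1 / δ)
  obtain ⟨B', hB'B, hB', ⟨H', hgap'⟩, hsep⟩ := hMK.exists_subset hTm hB hgap (max n₂ (max R n₃) + 1)
  have hsep_mono : ∀ m ≤ max n₂ (max R n₃) + 1, Separated T B' m :=
    fun m hm x hx i h0 hi => hsep x hx i h0 (by omega)
  set A := badBase μ T B' g (ε / 2) with hA
  have hAm : MeasurableSet A := measurableSet_badBase hTm hgap' hB' hg _
  have hbad := hn₂ B' H' hB' hgap' (hsep_mono _ (by omega))
  have hword : ∀ r, ∃ ζ : ℕ → X, (∃ b ∈ A, returnTime T B' b = r) →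
      IsWord T B r ζ ∧ ∀ j, |∑ i ∈ Finset.range r, u j (ζ i)| ≤ ε / 2 * r := by
    intro r
    by_cases hr : ∃ b ∈ A, returnTime T B' b = r
    · obtain ⟨b, hb, rfl⟩ := hr
      obtain ⟨ζ, hζ⟩ := hR (returnTime T B' b)
        ((hsep_mono R (by omega)).le_returnTime hgap' hb.1)
        ⟨b, hB'B hb.1, hB'B (hgap'.returnTime_spec b).2.1⟩
      exact ⟨ζ, fun _ => hζ⟩
    · obtain ⟨x⟩ : Nonempty X := by
        by_contra hne
        rw [not_nonempty_iff] at hne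
        have := measure_univ (μ := μ)
        simp [Set.univ_eq_empty_iff.2 hne] at this
      exact ⟨fun _ => x, fun h => absurd h hr⟩
  choose ζ hζ using hword
  set π : X → X := fun x => if basePt T B' x ∈ A then
    ζ (returnTime T B' (basePt T B' x)) (age T B' x) else x with hπ
  have hζA : ∀ x, basePt T B' x ∈ A → IsWord T B (returnTime T B' (basePt T B' x))
      (ζ (returnTime T B' (basePt T B' x))) := fun x hx => (hζ _ ⟨_, hx, rfl⟩).1
  have hbm := hgap'.measurable_basePt hB'
  have hπm : Measurable π := by
    refine Measurable.ite (hbm hAm) ?_ measurable_id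
    have h1 : Measurable fun p : ℕ × ℕ => ζ p.1 p.2 := measurable_of_countable _
    exact h1.comp (((hgap'.measurable_returnTime hTm hB').comp hbm).prodMk
      (hgap'.measurable_age hB'))
  have hentry : ∀ x, T x ∈ B' → T (π x) ∈ B ∧ π (T x) ∈ B := by
    intro x hx
    obtain ⟨h1, h2⟩ := GapBound.of_mem (T := T) hx
    constructor
    · by_cases hxA : basePt T B' x ∈ A
      · have h3 := (hζA x hxA).last
        have h4 : π x = ζ (returnTime T B' (basePt T B' x)) (age T B' x) := if_pos hxA
        rw [h4]
        have h5 := hgap'.step_of_mem hx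
        rwa [show returnTime T B' (basePt T B' x) - 1 = age T B' x by omega] at h3
      · have h4 : π x = x := if_neg hxA
        rw [h4]; exact hB'B hx
    · by_cases hxA : basePt T B' (T x) ∈ A
      · have h3 := (hζA _ hxA).zero_mem
        have h4 : π (T x) = ζ (returnTime T B' (basePt T B' (T x))) (age T B' (T x)) := if_pos hxA
        rw [h4, h2]; exact h3
      · have h4 : π (T x) = T x := if_neg hxA
        rw [h4]; exact hB'B hx
  have hstep : ∀ x, π (T x) = T (π x) ∨ (T (π x) ∈ B ∧ π (T x) ∈ B) := by
    intro x
    by_cases hx : T x ∈ B'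
    · exact Or.inr (hentry x hx)
    · obtain ⟨h1, h2⟩ := hgap'.step_of_notMem hx
      by_cases hxA : basePt T B' x ∈ A
      · have h4 : π x = ζ (returnTime T B' (basePt T B' x)) (age T B' x) := if_pos hxA
        have h5 : π (T x) = ζ (returnTime T B' (basePt T B' x)) (age T B' x + 1) := by
          rw [← h2, ← h1]; exact if_pos (h1.symm ▸ hxA)
        rw [h4, h5]
        refine (hζA x hxA).step _ ?_
        have h6 := hgap'.age_lt_returnTime (T x)
        rwa [h1, h2] at h6
      · left
        have h4 : π x = x := if_neg hxA
        have h5 : π (T x) = T x := if_neg (by rwa [h1])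
        rw [h4, h5]
  refine ⟨B', π, hB', ⟨H', hgap'⟩, hπm, fun z hz n => ?_, ?_, ?_, ?_⟩
  · rcases hz n with h | ⟨h1, h2⟩
    · simp only [Function.comp_apply, h]; exact hstep _
    · right
      refine ⟨(hentry _ h1).1, ?_⟩
      have h3 := (hentry (T.symm (z (n + 1))) (by simpa using h2)).2
      simpa using h3
  · refine lt_of_le_of_lt (measureReal_mono fun x hx => ?_) hbad
    by_contra hxA
    exact hx (if_neg hxA)
  · have h1 := (hsep_mono n₃ (by omega)).mul_measureReal_le hT.toMeasurePreserving hB'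
    have h2 := mul_le_mul_of_nonneg_right hn₃ (measureReal_nonneg (μ := μ) (s := B'))
    have h3 := h2.trans h1
    rw [div_mul_eq_mul_div, one_mul, div_le_iff₀ hδ, one_mul] at h3
    exact h3
  · obtain ⟨N₀, hN₀⟩ := exists_nat_ge (2 * H' / (ε / 2))
    rw [div_le_iff₀ (by positivity)] at hN₀
    refine ⟨max N₀ H', fun N hN z hz j => ?_⟩
    have hN1 : (N₀ : ℝ) ≤ N := by exact_mod_cast (le_max_left _ _).trans hN
    set w : ℕ → ℝ := fun n => u j (π (z n)) with hw
    have hblock : ∀ t, z t ∈ B' → ∃ r, 0 < r ∧ r ≤ H' ∧ z (t + r) ∈ B' ∧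
        |∑ i ∈ Finset.range r, w (t + i)| ≤ ε / 2 * r := by
      intro t ht
      obtain ⟨h1, h2⟩ := hz.apply_add hgap' t
      obtain ⟨h0, -, hle⟩ := hgap'.returnTime_spec (z t)
      refine ⟨returnTime T B' (z t), h0, hle, h2, ?_⟩
      by_cases hA' : z t ∈ A
      · have h3 : ∑ i ∈ Finset.range (returnTime T B' (z t)), w (t + i) =
            ∑ i ∈ Finset.range (returnTime T B' (z t)),
              u j (ζ (returnTime T B' (z t)) i) := by
          refine Finset.sum_congr rfl fun i hi => ?_
          have hi := Finset.mem_range.1 hi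
          have h4 := GapBound.basePt_iterate ht hi
          have h5 : π (T^[i] (z t)) = ζ (returnTime T B' (z t)) i := by
            have h6 : π (T^[i] (z t)) = ζ (returnTime T B' (basePt T B' (T^[i] (z t))))
              (age T B' (T^[i] (z t))) := if_pos (h4.symm ▸ hA')
            rw [h6, h4, GapBound.age_iterate ht hi]
          simp only [hw, h1 i hi, h5]
        rw [h3]
        exact (hζ _ ⟨_, hA', rfl⟩).2 j
      · have h3 : ∑ i ∈ Finset.range (returnTime T B' (z t)), w (t + i) =
            ∑ i ∈ Finset.range (returnTime T B' (z t)), u j (T^[i] (z t)) := by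
          refine Finset.sum_congr rfl fun i hi => ?_
          have hi := Finset.mem_range.1 hi
          have h5 : π (T^[i] (z t)) = T^[i] (z t) :=
            if_neg (by rwa [GapBound.basePt_iterate ht hi])
          simp only [hw, h1 i hi, h5]
        rw [h3]
        by_contra! hlt
        exact hA' ⟨ht, j, hlt⟩
    obtain ⟨-, h2⟩ := hz.apply_add hgap' 0
    have hle := (hgap'.returnTime_spec (z 0)).2.2
    rw [zero_add] at h2
    set r := returnTime T B' (z 0) with hr
    have hw1 : ∀ n, |w n| ≤ 1 := fun n => hu1 j _
    obtain ⟨m, rfl⟩ := Nat.exists_eq_add_of_le (hle.trans ((le_max_right _ _).trans hN))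
    have h3 := abs_sum_le_of_blocks hw1 (P := fun t => z t ∈ B') (by positivity) hblock m r h2
    have h4 := abs_sum_le_of_abs_le_one hw1 r
    change |∑ n ∈ Finset.range (r + m), w n| ≤ _
    rw [Finset.sum_range_add]
    refine (abs_add_le _ _).trans ?_
    have h5 : (r : ℝ) ≤ H' := by exact_mod_cast hle
    push_cast at hN1 ⊢
    have h6 := mul_le_mul_of_nonneg_right hN1 (show 0 ≤ ε / 2 by positivity)
    have h7 : 0 ≤ ε / 2 * r := by positivity
    linarith

theorem IsPseudoOrbit.eq_iterate_or_exists_mem {X : Type*} {f : X → X} {B : Set X} {w : ℕ → X}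
    (hw : IsPseudoOrbit f B w) (n i : ℕ) :
    w (n + i) = f^[i] (w n) ∨ ∃ l, 0 < l ∧ l ≤ i ∧ f^[l] (w n) ∈ B := by
  induction i with
  | zero => exact Or.inl rfl
  | succ i ih =>
    rcases ih with h | ⟨l, h0, hl, hB⟩
    · rcases hw (n + i) with h1 | h1
      · left
        rw [Function.iterate_succ_apply', ← h, ← h1, add_assoc]
      · refine Or.inr ⟨i + 1, by omega, le_rfl, ?_⟩
        rw [Function.iterate_succ_apply', ← h]
        exact h1.1
    · exact Or.inr ⟨l, h0, by omega, hB⟩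

theorem isPseudoOrbit_iterate {X : Type*} (f : X → X) (B : Set X) (x : X) :
    IsPseudoOrbit f B fun n => f^[n] x :=
  fun n => Or.inl (Function.iterate_succ_apply' f n x)

/-- A stage of the construction, formulated in terms of the patterns seen through a symbolic
coding `G`. -/
theorem exists_pattern_stage {X : Type*} [MeasurableSpace X] {μ : Measure X}
    [IsProbabilityMeasure μ] {T : X ≃ᵐ X} (hT : Ergodic T μ) (hMK : HasMarkers T) {B : Set X}
    (hB : MeasurableSet B) {H : ℕ} (hgap : GapBound T B H) {G : X → ℕ → Bool}
    (hG : Measurable G) (k : ℕ) {ε δ : ℝ} (hε : 0 < ε) (hδ : 0 < δ) :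
    ∃ (B' : Set X) (π : X → X), MeasurableSet B' ∧ (∃ H', GapBound T B' H') ∧ Measurable π ∧
      (∀ z, IsPseudoOrbit T B' z → IsPseudoOrbit T B (π ∘ z)) ∧
      μ.real {x | π x ≠ x} < ε ∧ μ.real B' ≤ δ ∧
      ∃ N : ℕ, 0 < N ∧ ∀ S : Set (Fin k → Fin k → Bool), ∃ c : ℝ, ∀ z, IsPseudoOrbit T B' z →
        |∑ n ∈ Finset.range N,
          S.indicator (fun _ => (1 : ℝ)) (fun i j => G (π (z (n + i))) j) - c * N| ≤
          (2 * ε + k * μ.real B) * N := by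
  classical
  have hTm := T.measurable
  set C : Set X := ⋃ l ∈ Finset.range k, T^[l + 1] ⁻¹' B with hC
  have hCm : MeasurableSet C :=
    Finset.measurableSet_biUnion _ fun l _ => (hTm.iterate (l + 1)) hB
  have hCμ : μ.real C ≤ k * μ.real B := by
    refine (measureReal_biUnion_finset_le _ _).trans ?_
    have : ∀ l ∈ Finset.range k, μ.real (T^[l + 1] ⁻¹' B) = μ.real B := fun l _ =>
      (hT.toMeasurePreserving.iterate (l + 1)).measureReal_preimage hB.nullMeasurableSet
    rw [Finset.sum_congr rfl this]
    simp
  have hPm : Measurable fun y (i j : Fin k) => G (T^[i] y) j := by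
    refine measurable_pi_lambda _ fun i => measurable_pi_lambda _ fun j => ?_
    exact (measurable_pi_apply (j : ℕ)).comp (hG.comp (hTm.iterate i))
  set D : Option (Set (Fin k → Fin k → Bool)) → Set X := fun o =>
    o.elim C fun S => (fun y (i j : Fin k) => G (T^[i] y) j) ⁻¹' S with hD
  have hDm : ∀ o, MeasurableSet (D o) := by
    rintro (_ | S)
    · exact hCm
    · exact hPm (Set.toFinite S).measurableSet
  obtain ⟨B', π, hB', hgap', hπ, hps, hπμ, hB'μ, N₀, hN₀⟩ := exists_stage hT hMK hB hgap
    (g := fun o => (D o).indicator (1 : X → ℝ))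
    (fun o => measurable_one.indicator (hDm o))
    (fun o x => Set.indicator_nonneg (fun _ _ => zero_le_one) x)
    (fun o x => Set.indicator_le_self' (f := (1 : X → ℝ)) (fun _ _ => zero_le_one) x) hε hδ
  refine ⟨B', π, hB', hgap', hπ, hps, hπμ, hB'μ, N₀ + 1, by omega, fun S =>
    ⟨μ.real (D (some S)), fun z hz => ?_⟩⟩
  set N := N₀ + 1 with hN
  have h1 := hN₀ N (by omega) z hz (some S)
  have h2 := hN₀ N (by omega) z hz none
  simp only [integral_indicator_one (hDm _), Finset.sum_sub_distrib, Finset.sum_const,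
    Finset.card_range, nsmul_eq_mul] at h1 h2
  have h3 : |∑ n ∈ Finset.range N,
      (S.indicator (fun _ => (1 : ℝ)) (fun i j : Fin k => G (π (z (n + i))) j) -
        (D (some S)).indicator (1 : X → ℝ) (π (z n)))| ≤
      ∑ n ∈ Finset.range N, (D none).indicator (1 : X → ℝ) (π (z n)) := by
    refine (Finset.abs_sum_le_sum_abs _ _).trans (Finset.sum_le_sum fun n _ => ?_)
    by_cases hn : π (z n) ∈ C
    · rw [show (D none).indicator (1 : X → ℝ) (π (z n)) = 1 from Set.indicator_of_mem hn _]
      simp only [Set.indicator_apply, Pi.one_apply]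
      split_ifs <;> norm_num
    · have h4 : (fun i j : Fin k => G (π (z (n + i))) j) =
          fun i j : Fin k => G (T^[i] (π (z n))) j := by
        funext i j
        rcases (hps z hz).eq_iterate_or_exists_mem n i with h | ⟨l, h0, hl, hlB⟩
        · simp only [Function.comp_apply] at h
          rw [h]
        · refine absurd ?_ hn
          simp only [hC, Set.mem_iUnion, Finset.mem_range, Set.mem_preimage]
          exact ⟨l - 1, by omega, by rwa [Nat.sub_add_cancel h0]⟩
      rw [h4, show (D (some S)).indicator (1 : X → ℝ) (π (z n)) =
        S.indicator (fun _ => (1 : ℝ)) (fun i j : Fin k => G (T^[i] (π (z n))) j) from rfl, sub_self,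
        abs_zero]
      exact Set.indicator_nonneg (fun _ _ => zero_le_one) _
  rw [Finset.sum_sub_distrib] at h3
  have h5 := mul_le_mul_of_nonneg_right hCμ (Nat.cast_nonneg (α := ℝ) N)
  have h6 : μ.real (D none) = μ.real C := rfl
  rw [h6] at h2
  rw [abs_le] at h1 h2 h3 ⊢
  constructor <;> linarith [h1.1, h1.2, h2.1, h2.2, h3.1, h3.2]

/-- The data maintained during the construction: a base and a symbolic coding. -/
structure CodingStage {X : Type*} [MeasurableSpace X] (f : X → X) where
  base : Set X
  code : X → ℕ → Bool
  measurableSet_base : MeasurableSet base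
  gapBound : ∃ H, GapBound f base H
  measurable_code : Measurable code

theorem exists_coding_sequence {X : Type*} [MeasurableSpace X] {μ : Measure X}
    [IsProbabilityMeasure μ] {T : X ≃ᵐ X} (hT : Ergodic T μ) (hMK : HasMarkers T)
    {q : ℕ → X → Bool} (hq : ∀ j, Measurable (q j)) :
    ∃ (B : ℕ → Set X) (π : ℕ → X → X) (G : ℕ → X → ℕ → Bool),
      (∀ k, Measurable (G k)) ∧
      (∀ k x, G (k + 1) x = Function.update (G k (π k x)) k (q k x)) ∧
      (∀ k z, IsPseudoOrbit T (B (k + 1)) z → IsPseudoOrbit T (B k) (π k ∘ z)) ∧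
      (∀ k, μ.real {x | π k x ≠ x} < (1 / 2) ^ k) ∧
      ∀ k, 0 < k → ∃ N : ℕ, 0 < N ∧ ∀ S : Set (Fin k → Fin k → Bool), ∃ c : ℝ,
        ∀ z, IsPseudoOrbit T (B (k + 1)) z →
        |∑ n ∈ Finset.range N,
          S.indicator (fun _ => (1 : ℝ)) (fun i j => G (k + 1) (z (n + i)) j) - c * N| ≤
          (4 * (1 / 2) ^ k) * N := by
  classical
  have step : ∀ (k : ℕ) (s : CodingStage T), ∃ (s' : CodingStage T) (π : X → X),
      (∀ x, s'.code x = Function.update (s.code (π x)) k (q k x)) ∧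
      (∀ z, IsPseudoOrbit T s'.base z → IsPseudoOrbit T s.base (π ∘ z)) ∧
      μ.real {x | π x ≠ x} < (1 / 2) ^ k ∧ μ.real s'.base ≤ (1 / 2) ^ k / (k + 1 : ℕ) ∧
      ∃ N : ℕ, 0 < N ∧ ∀ S : Set (Fin k → Fin k → Bool), ∃ c : ℝ,
        ∀ z, IsPseudoOrbit T s'.base z →
        |∑ n ∈ Finset.range N,
          S.indicator (fun _ => (1 : ℝ)) (fun i j => s.code (π (z (n + i))) j) - c * N| ≤
          (2 * (1 / 2) ^ k + k * μ.real s.base) * N := by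
    intro k s
    obtain ⟨H, hH⟩ := s.gapBound
    obtain ⟨B', π, hB', hgap', hπ, h1, h2, h3, h4⟩ :=
      exists_pattern_stage hT hMK s.measurableSet_base hH s.measurable_code k
        (show (0 : ℝ) < (1 / 2) ^ k by positivity)
        (show (0 : ℝ) < (1 / 2) ^ k / (k + 1 : ℕ) by positivity)
    refine ⟨⟨B', fun x => Function.update (s.code (π x)) k (q k x), hB', hgap', ?_⟩, π,
      fun x => rfl, h1, h2, h3, h4⟩
    refine measurable_pi_lambda _ fun j => ?_
    by_cases hj : j = k
    · subst hj; simpa using hq j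
    · simp only [Function.update_of_ne hj]
      exact (measurable_pi_apply j).comp (s.measurable_code.comp hπ)
  choose nxt π h1 h2 h3 h4 h5 using step
  let s : ℕ → CodingStage T := fun k => Nat.rec
    ⟨Set.univ, fun _ _ => false, MeasurableSet.univ, ⟨1, fun x => ⟨0, one_pos, trivial⟩⟩,
      measurable_const⟩ (fun k t => nxt k t) k
  refine ⟨fun k => (s k).base, fun k => π k (s k), fun k => (s k).code,
    fun k => (s k).measurable_code, fun k => h1 k (s k), fun k => h2 k (s k),
    fun k => h3 k (s k), fun k hk => ?_⟩
  obtain ⟨N, hN, hS⟩ := h5 k (s k)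
  refine ⟨N, hN, fun S => ?_⟩
  obtain ⟨c, hc⟩ := hS S
  refine ⟨c, fun z hz => ?_⟩
  have e1 : ∀ n, (fun i j : Fin k => (s (k + 1)).code (z (n + i)) j) =
      fun i j : Fin k => (s k).code (π k (s k) (z (n + i))) j := by
    intro n
    funext i j
    rw [show (s (k + 1)).code (z (n + i)) = _ from h1 k (s k) (z (n + i)),
      Function.update_of_ne j.2.ne]
  simp only [e1]
  refine (hc z hz).trans (mul_le_mul_of_nonneg_right ?_ (Nat.cast_nonneg _))
  obtain ⟨l, rfl⟩ : ∃ l, k = l + 1 := ⟨k - 1, by omega⟩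
  have e2 : μ.real (s (l + 1)).base ≤ (1 / 2) ^ l / (l + 1 : ℕ) := h4 l (s l)
  rw [le_div_iff₀ (by positivity)] at e2
  rw [pow_succ] at *
  linarith

/-- **Uniformly ergodic coding.** -/
theorem exists_uniform_coding {X : Type*} [MeasurableSpace X] {μ : Measure X}
    [IsProbabilityMeasure μ] {T : X ≃ᵐ X} (hT : Ergodic T μ) (hMK : HasMarkers T)
    {q : ℕ → X → Bool} (hq : ∀ j, Measurable (q j)) :
    ∃ F : X → ℕ → Bool, Measurable F ∧ (∀ᵐ x ∂μ, ∀ᶠ j in atTop, F x j = q j x) ∧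
      ∀ (m : ℕ) (S : Set (Fin m → Fin m → Bool)) (ε : ℝ), 0 < ε → ∃ N : ℕ, 0 < N ∧ ∃ c : ℝ,
        ∀ᵐ x ∂μ, |∑ n ∈ Finset.range N,
          S.indicator (fun _ => (1 : ℝ)) (fun i j => F (T^[n + i] x) j) - c * N| ≤ ε * N := by
  classical
  obtain ⟨B, π, G, hG, hGs, hps, hπ, hN⟩ := exists_coding_sequence hT hMK hq
  have hGlt : ∀ k x j, j < k → G (k + 1) x j = G k (π k x) j := fun k x j hj => by
    rw [hGs, Function.update_of_ne hj.ne]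
  have hdown : ∀ p k z, IsPseudoOrbit T (B (k + p)) z → ∃ w, IsPseudoOrbit T (B k) w ∧
      ∀ n, ∀ j < k, G (k + p) (z n) j = G k (w n) j := by
    intro p k
    induction p with
    | zero => exact fun z hz => ⟨z, hz, fun _ _ _ => rfl⟩
    | succ p ih =>
      intro z hz
      obtain ⟨w, hw, hw'⟩ := ih _ (hps (k + p) z hz)
      refine ⟨w, hw, fun n j hj => ?_⟩
      rw [← hw' n j hj]
      exact hGlt (k + p) (z n) j (by omega)
  have hBC : ∀ᵐ x ∂μ, ∀ᶠ k in atTop, π k x = x := by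
    have : ∑' k, μ {x | π k x ≠ x} ≠ ⊤ := by
      refine ne_top_of_le_ne_top (b := ∑' k, ENNReal.ofReal ((1 / 2) ^ k)) ?_
        (ENNReal.tsum_le_tsum fun k => ?_)
      · exact summable_geometric_two.tsum_ofReal_ne_top
      · rw [← ofReal_measureReal]
        exact ENNReal.ofReal_le_ofReal (hπ k).le
    filter_upwards [ae_eventually_notMem this] with x hx
    filter_upwards [hx] with k hk
    simpa using hk
  have hstab : ∀ x, (∀ᶠ k in atTop, π k x = x) → ∃ K, ∀ j n, K ≤ n → j < n →
      G n x j = G (max K (j + 1)) x j := by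
    intro x hx
    obtain ⟨K, hK⟩ := eventually_atTop.1 hx
    refine ⟨K, fun j n hn hj => ?_⟩
    induction n, (max_le hn hj : max K (j + 1) ≤ n) using Nat.le_induction with
    | base => rfl
    | succ n hn' ih =>
      have h1 := (le_max_left _ _).trans hn'
      have h2 := (le_max_right _ _).trans hn'
      rw [hGlt n x j h2, hK n h1, ih h1 h2]
  set F : X → ℕ → Bool := fun x j => decide (∀ᶠ n in atTop, G n x j = true) with hF
  have hFm : Measurable F := by
    refine measurable_pi_lambda _ fun j => ?_
    have h1 : MeasurableSet {x | ∀ᶠ n in atTop, G n x j = true} := by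
      simp only [eventually_atTop, Set.ofPred_exists, Set.ofPred_forall]
      exact MeasurableSet.iUnion fun a => MeasurableSet.iInter fun n => MeasurableSet.iInter fun _ =>
        ((measurable_pi_apply j).comp (hG n)) (measurableSet_singleton true)
    refine measurable_to_bool ?_
    convert h1 using 1
    ext x
    simp [hF]
  have hFeq : ∀ x, (∀ᶠ k in atTop, π k x = x) → ∃ K, ∀ j n, K ≤ n → j < n →
      G n x j = F x j := by
    intro x hx
    obtain ⟨K, hK⟩ := hstab x hx
    refine ⟨K, fun j n hn hj => ?_⟩
    rw [hK j n hn hj]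
    have h1 : (∀ᶠ n in atTop, G n x j = true) ↔ G (max K (j + 1)) x j = true := by
      have h2 : ∀ᶠ n in atTop, G n x j = G (max K (j + 1)) x j := by
        filter_upwards [eventually_ge_atTop K, eventually_gt_atTop j] with n h1 h2
        exact hK j n h1 h2
      constructor
      · intro h
        obtain ⟨n, h3, h4⟩ := (h2.and h).exists
        rw [← h3, h4]
      · intro h
        filter_upwards [h2] with n hn
        rw [hn, h]
    simp only [hF, h1, Bool.decide_eq_true]
  refine ⟨F, hFm, ?_, fun m S ε hε => ?_⟩
  · filter_upwards [hBC] with x hx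
    obtain ⟨K, hK⟩ := hFeq x hx
    filter_upwards [eventually_ge_atTop K] with j hj
    rw [← hK j (j + 1) (by omega) (by omega), hGs, Function.update_self]
  · obtain ⟨l, hl⟩ := exists_pow_lt_of_lt_one (show (0 : ℝ) < ε / 4 by positivity)
      (show (1 / 2 : ℝ) < 1 by norm_num)
    set k := max (m + 1) l with hk
    have hkm : m + 1 ≤ k := le_max_left _ _
    have hkε : (1 / 2 : ℝ) ^ k < ε / 4 :=
      (pow_le_pow_of_le_one (by norm_num) (by norm_num) (le_max_right _ _)).trans_lt hl
    obtain ⟨N, hN0, hNS⟩ := hN k (by omega)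
    have hmk : ∀ i : Fin m, (i : ℕ) < k := fun i => by omega
    obtain ⟨c, hc⟩ := hNS ((fun (P : Fin k → Fin k → Bool) (i j : Fin m) => P ⟨i, hmk i⟩ ⟨j, hmk j⟩) ⁻¹' S)
    refine ⟨N, hN0, c, ?_⟩
    have hall : ∀ᵐ x ∂μ, ∀ i : ℕ, ∀ᶠ k in atTop, π k (T^[i] x) = T^[i] x :=
      ae_all_iff.2 fun i =>
        (hT.toMeasurePreserving.iterate i).quasiMeasurePreserving.ae hBC
    filter_upwards [hall] with x hx
    choose K hK using fun i => hFeq _ (hx i)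
    set p := (Finset.range (N + m)).sup K with hp
    obtain ⟨w, hw, hw'⟩ := hdown p (k + 1) _ (isPseudoOrbit_iterate T _ x)
    have h1 : ∀ n ∈ Finset.range N, S.indicator (fun _ => (1 : ℝ)) (fun i j => F (T^[n + i] x) j) =
        ((fun (P : Fin k → Fin k → Bool) (i j : Fin m) => P ⟨i, hmk i⟩ ⟨j, hmk j⟩) ⁻¹' S).indicator
          (fun _ => (1 : ℝ)) (fun i j => G (k + 1) (w (n + i)) j) := by
      intro n hn
      have hn := Finset.mem_range.1 hn
      have h2 : (fun i j : Fin m => F (T^[n + i] x) j) =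
          fun i j : Fin m => G (k + 1) (w (n + i)) j := by
        funext i j
        have h3 : K (n + i) ≤ p :=
          Finset.le_sup (f := K) (Finset.mem_range.2 (by omega))
        rw [← hw' (n + i) j (by omega), hK (n + i) j (k + 1 + p) (by omega) (by omega)]
      rw [h2]
      rfl
    rw [Finset.sum_congr rfl h1]
    refine (hc w hw).trans (mul_le_mul_of_nonneg_right (by linarith) (Nat.cast_nonneg _))

theorem CesaroMixing.map {X Y : Type*} [MeasurableSpace X] [MeasurableSpace Y] {μ : Measure X}
    {T : X → X} (h : CesaroMixing μ T) (hT : MeasurePreserving T μ μ) {φ : X → Y}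
    (hφ : Measurable φ) {S : Y → Y} (hS : Measurable S) (hc : ∀ᵐ x ∂μ, φ (T x) = S (φ x)) :
    CesaroMixing (μ.map φ) S := by
  intro A B hA hB
  have hit : ∀ᵐ x ∂μ, ∀ j : ℕ, φ (T^[j] x) = S^[j] (φ x) := by
    have h1 : ∀ᵐ x ∂μ, ∀ j : ℕ, φ (T (T^[j] x)) = S (φ (T^[j] x)) :=
      ae_all_iff.2 fun j => (hT.iterate j).quasiMeasurePreserving.ae hc
    filter_upwards [h1] with x hx j
    induction j with
    | zero => rfl
    | succ j ih => rw [Function.iterate_succ_apply', hx, ih, Function.iterate_succ_apply']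
  refine (h _ _ (hφ hA) (hφ hB)).congr fun N => ?_
  congr 1
  refine Finset.sum_congr rfl fun j _ => ?_
  rw [map_measureReal_apply hφ (((hS.iterate j) hA).inter hB), map_measureReal_apply hφ hA,
    map_measureReal_apply hφ hB]
  congr 2
  refine measureReal_congr ?_
  filter_upwards [hit] with x hx
  change (φ (T^[j] x) ∈ A ∧ φ x ∈ B) = (S^[j] (φ x) ∈ A ∧ φ x ∈ B)
  rw [hx]

/-- A marker structure is available on an invariant set of full measure, so uniformly ergodic
codings exist for nonatomic systems. -/
theorem exists_uniform_coding_of_nullSingletonClass {X : Type*} [MeasurableSpace X]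
    [StandardBorelSpace X] {μ : Measure X} [IsProbabilityMeasure μ] [NullSingletonClass μ]
    {T : X ≃ᵐ X} (hT : Ergodic T μ) {q : ℕ → X → Bool} (hq : ∀ j, Measurable (q j)) :
    ∃ F : X → ℕ → Bool, Measurable F ∧ (∀ᵐ x ∂μ, ∀ᶠ j in atTop, F x j = q j x) ∧
      ∀ (m : ℕ) (S : Set (Fin m → Fin m → Bool)) (ε : ℝ), 0 < ε → ∃ N : ℕ, 0 < N ∧ ∃ c : ℝ,
        ∀ᵐ x ∂μ, |∑ n ∈ Finset.range N,
          S.indicator (fun _ => (1 : ℝ)) (fun i j => F (T^[n + i] x) j) - c * N| ≤ ε * N := by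
  classical
  obtain ⟨R, hR, hTR, hμR, hM⟩ := exists_markers hT fun ε hε =>
    exists_measurableSet_measure_lt (μ := μ) hε
  have hmem : ∀ x, T x ∈ R ↔ x ∈ R := fun x => by
    conv_rhs => rw [← hTR]
    rfl
  have hmem' : ∀ x, T.symm x ∈ R ↔ x ∈ R := fun x => by
    rw [← hmem, T.apply_symm_apply]
  set μR : Measure R := μ.comap Subtype.val with hμRdef
  have hRae : ∀ᵐ x ∂μ, x ∈ R := (prob_compl_eq_zero_iff hR).2 hμR
  have hrestr : μ.restrict R = μ := Measure.restrict_eq_self_of_ae_mem hRae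
  have hmap : MeasurePreserving (Subtype.val : R → X) μR μ :=
    ⟨measurable_subtype_coe, by rw [hμRdef, map_comap_subtype_coe hR, hrestr]⟩
  have haeR : ∀ p : X → Prop, (∀ᵐ x ∂μ, p x) ↔ ∀ᵐ x : R ∂μR, p x := fun p => by
    rw [← ae_restrict_iff_subtype hR, hrestr]
  have hprob : IsProbabilityMeasure μR := ⟨by
    rw [hμRdef, comap_subtype_coe_apply hR, Set.image_univ, Subtype.range_coe, hμR]⟩
  let TR : R ≃ᵐ R :=
    { toFun := fun x => ⟨T x, (hmem x).2 x.2⟩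
      invFun := fun x => ⟨T.symm x, (hmem' x).2 x.2⟩
      left_inv := fun x => Subtype.ext (T.symm_apply_apply x)
      right_inv := fun x => Subtype.ext (T.apply_symm_apply x)
      measurable_toFun := (T.measurable.comp measurable_subtype_coe).subtype_mk
      measurable_invFun := (T.symm.measurable.comp measurable_subtype_coe).subtype_mk }
  have hval : ∀ x : R, (TR x : X) = T x := fun _ => rfl
  have hit : ∀ (n : ℕ) (x : R), ((TR^[n] x : R) : X) = T^[n] x := by
    intro n x
    induction n with
    | zero => rfl
    | succ n ih => rw [Function.iterate_succ_apply', hval, ih, Function.iterate_succ_apply']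
  have himage : ∀ s : Set R, Subtype.val '' (TR ⁻¹' s) = T ⁻¹' (Subtype.val '' s) := by
    intro s
    ext x
    constructor
    · rintro ⟨y, hy, rfl⟩
      exact ⟨_, hy, rfl⟩
    · rintro ⟨y, hy, hyx⟩
      have hx : x ∈ R := (hmem x).1 (hyx ▸ y.2)
      exact ⟨⟨x, hx⟩, by rwa [Set.mem_preimage, show TR ⟨x, hx⟩ = y from Subtype.ext hyx.symm],
        rfl⟩
  have hTRe : Ergodic TR μR := by
    refine ⟨⟨TR.measurable, ?_⟩, ⟨fun s hs hinv => ?_⟩⟩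
    · ext s hs
      rw [Measure.map_apply TR.measurable hs, hμRdef, comap_subtype_coe_apply hR,
        comap_subtype_coe_apply hR, himage,
        hT.measure_preimage ((MeasurableEmbedding.subtype_coe hR).measurableSet_image.2
          hs).nullMeasurableSet]
    · have h1 : T ⁻¹' (Subtype.val '' s) = Subtype.val '' s := by rw [← himage, hinv]
      rw [eventuallyConst_set]
      rcases hT.toPreErgodic.ae_mem_or_ae_notMem
        ((MeasurableEmbedding.subtype_coe hR).measurableSet_image.2 hs) h1 with h | h
      · left
        filter_upwards [(haeR _).1 h] with x hx
        simpa using hx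
      · right
        filter_upwards [(haeR _).1 h] with x hx
        simpa using hx
  have hMK : HasMarkers TR := by
    intro L hL
    obtain ⟨M, hMm, hMg, hMs⟩ := hM L hL
    refine ⟨Subtype.val ⁻¹' M, measurable_subtype_coe hMm, fun x => ?_, fun x hx i h0 hi => ?_⟩
    · obtain ⟨i, hi, hiM⟩ := hMg x x.2
      exact ⟨i, hi, by rwa [Set.mem_preimage, hit]⟩
    · rw [Set.mem_preimage, hit]
      exact hMs x hx i h0 hi
  obtain ⟨F, hF, hFq, hFS⟩ := exists_uniform_coding hTRe hMK (q := fun j x => q j x)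
    fun j => (hq j).comp measurable_subtype_coe
  have hFx : ∀ x : R, (if h : (x : X) ∈ R then F ⟨x, h⟩ else fun _ => false) = F x :=
    fun x => dif_pos x.2
  refine ⟨fun x => if h : x ∈ R then F ⟨x, h⟩ else fun _ => false,
    Measurable.dite hF measurable_const hR, ?_, fun m S ε hε => ?_⟩
  · rw [haeR]
    simpa only [hFx] using hFq
  · obtain ⟨N, hN, c, hc⟩ := hFS m S ε hε
    refine ⟨N, hN, c, ?_⟩
    rw [haeR]
    simpa only [← hit, hFx] using hc

/-- The values of a uniformly ergodic coding can be chosen to determine the point. -/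
theorem exists_decodable_coding {X : Type*} [MeasurableSpace X]
    [StandardBorelSpace X] {μ : Measure X} [IsProbabilityMeasure μ] [NullSingletonClass μ]
    {T : X ≃ᵐ X} (hT : Ergodic T μ) :
    ∃ (F : X → ℕ → Bool) (D : (ℕ → Bool) → X), Measurable F ∧ Measurable D ∧
      (∀ᵐ x ∂μ, D (F x) = x) ∧
      ∀ (m : ℕ) (S : Set (Fin m → Fin m → Bool)) (ε : ℝ), 0 < ε → ∃ N : ℕ, 0 < N ∧ ∃ c : ℝ,
        ∀ᵐ x ∂μ, |∑ n ∈ Finset.range N,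
          S.indicator (fun _ => (1 : ℝ)) (fun i j => F (T^[n + i] x) j) - c * N| ≤ ε * N := by
  classical
  obtain ⟨e, he, hinj⟩ := MeasurableSpace.measurable_injection_nat_bool_of_countablySeparated X
  obtain ⟨x₀⟩ : Nonempty X := μ.nonempty_of_neZero
  obtain ⟨F, hF, hFq, hFS⟩ := exists_uniform_coding_of_nullSingletonClass hT
    (q := fun j x => e x j.unpair.1) fun j => (measurable_pi_apply _).comp he
  set A : (ℕ → Bool) → ℕ → Bool := fun b i => decide (∀ᶠ l in atTop, b (Nat.pair i l) = true)
    with hA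
  have hAm : Measurable A := by
    refine measurable_pi_lambda _ fun i => measurable_to_bool ?_
    have h1 : MeasurableSet {b : ℕ → Bool | ∀ᶠ l in atTop, b (Nat.pair i l) = true} := by
      simp only [eventually_atTop, Set.ofPred_exists, Set.ofPred_forall]
      exact MeasurableSet.iUnion fun a => MeasurableSet.iInter fun l => MeasurableSet.iInter fun _ =>
        measurableSet_eq_fun (measurable_pi_apply _) measurable_const
    convert h1 using 1
    ext b
    simp [hA]
  have hemb := he.measurableEmbedding hinj
  refine ⟨F, Function.extend e id (fun _ => x₀) ∘ A, hF,
    (hemb.measurable_extend measurable_id measurable_const).comp hAm, ?_, hFS⟩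
  filter_upwards [hFq] with x hx
  have h1 : A (F x) = e x := by
    funext i
    have h2 : ∀ᶠ l in atTop, F x (Nat.pair i l) = e x i := by
      have h3 : Tendsto (fun l => Nat.pair i l) atTop atTop :=
        tendsto_atTop_mono (fun l => Nat.right_le_pair i l) tendsto_id
      filter_upwards [h3.eventually hx] with l hl
      simpa using hl
    have h4 : (∀ᶠ l in atTop, F x (Nat.pair i l) = true) ↔ e x i = true := by
      constructor
      · intro h
        obtain ⟨l, h3, h4⟩ := (h2.and h).exists
        rw [← h3, h4]
      · intro h
        filter_upwards [h2] with l hl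
        rw [hl, h]
    simp only [hA, h4, Bool.decide_eq_true]
  simp only [Function.comp_apply, h1, hinj.extend_apply, id]

/-- The restriction of a homeomorphism to the support of an invariant measure. -/
theorem exists_support_system {Ω : Type} [TopologicalSpace Ω] [CompactSpace Ω] [TopologicalSpace.MetrizableSpace Ω]
    [MeasurableSpace Ω] [BorelSpace Ω] {σ : Ω ≃ₜ Ω} {m : Measure Ω} [IsProbabilityMeasure m]
    (hσ : MeasurePreserving σ m m) (hmix : CesaroMixing m σ)
    (hu : ∀ ρ : Measure Ω, IsProbabilityMeasure ρ → MeasurePreserving σ ρ ρ →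
      (∀ᵐ ω ∂ρ, ω ∈ m.support) → ρ = m) (d : ℕ) :
    ∃ (Y : Type) (_ : MetricSpace Y) (_ : CompactSpace Y) (_ : MeasurableSpace Y)
      (_ : BorelSpace Y) (S : Y ≃ₜ Y) (ν : Measure Y) (e : Y → Ω),
      IsProbabilityMeasure ν ∧ MeasurePreserving S ν ν ∧ StrictlyErgodicHomeo S ∧
      (∀ y : Y, StrictlyErgodicOn (apGens S d)
        (closure (grpOrbit (apGens S d) (fun _ : Fin d => y)))) ∧
      MeasurableEmbedding e ∧ ν.map e = m ∧ ∀ y, e (S y) = σ (e y) := by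
  let _ := TopologicalSpace.metrizableSpaceMetric Ω
  have hclosed : IsClosed m.support := Measure.isClosed_support
  have hKm := hclosed.measurableSet
  have hKae : ∀ᵐ ω ∂m, ω ∈ m.support := Measure.support_mem_ae
  have hinv : ∀ ω, ω ∈ m.support ↔ σ ω ∈ m.support := by
    have hsymm : MeasurePreserving σ.symm m m :=
      measurePreserving_of_leftInverse hσ σ.symm.continuous.measurable σ.symm_apply_apply
    have key : ∀ τ : Ω ≃ₜ Ω, MeasurePreserving τ m m → ∀ ω ∈ m.support, τ ω ∈ m.support := by
      intro τ hτ ω hω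
      rw [Measure.mem_support_iff_forall] at hω ⊢
      intro U hU
      refine (hω _ (τ.continuous.continuousAt hU)).trans_le ?_
      calc m (τ ⁻¹' U) ≤ m (τ ⁻¹' (toMeasurable m U)) :=
            measure_mono (Set.preimage_mono (subset_toMeasurable m U))
        _ = m U := by
            rw [hτ.measure_preimage (measurableSet_toMeasurable m U).nullMeasurableSet,
              measure_toMeasurable]
    exact fun ω => ⟨key σ hσ ω, fun h => by simpa using key σ.symm hsymm _ h⟩
  have hemb := MeasurableEmbedding.subtype_coe hKm
  set ν : Measure m.support := m.comap Subtype.val with hν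
  have hmap : ν.map Subtype.val = m := by
    rw [hν, map_comap_subtype_coe hKm, Measure.restrict_eq_self_of_ae_mem hKae]
  let S : m.support ≃ₜ m.support := σ.subtype hinv
  have hS : ∀ y, (S y : Ω) = σ y := fun _ => rfl
  have hprob : IsProbabilityMeasure ν := ⟨by
    rw [hν, comap_subtype_coe_apply hKm, Set.image_univ, Subtype.range_coe,
      (prob_compl_eq_zero_iff hKm).1 hKae]⟩
  have hmapS : ∀ ρ : Measure m.support, (ρ.map S).map Subtype.val = (ρ.map Subtype.val).map σ := by
    intro ρ
    rw [Measure.map_map measurable_subtype_coe S.continuous.measurable,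
      Measure.map_map σ.continuous.measurable measurable_subtype_coe]
    rfl
  have hmapinj : ∀ ρ ρ' : Measure m.support, ρ.map Subtype.val = ρ'.map Subtype.val → ρ = ρ' := by
    intro ρ ρ' h
    rw [← hemb.comap_map ρ, h, hemb.comap_map]
  have hSν : MeasurePreserving S ν ν :=
    ⟨S.continuous.measurable, hmapinj _ _ (by rw [hmapS, hmap, hσ.map_eq])⟩
  have hopen : ν.IsOpenPosMeasure := by
    refine ⟨fun U hU hne => ?_⟩
    obtain ⟨y, hy⟩ := hne
    obtain ⟨V, hV, rfl⟩ := isOpen_induced_iff.1 hU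
    have h1 := (Measure.mem_support_iff_forall _).1 y.2 V (hV.mem_nhds hy)
    rw [← hmap, Measure.map_apply measurable_subtype_coe hV.measurableSet] at h1
    exact h1.ne'
  have huS : ∀ ρ : Measure m.support, IsProbabilityMeasure ρ → MeasurePreserving S ρ ρ →
      ρ = ν := by
    intro ρ hρ hSρ
    refine hmapinj _ _ ?_
    rw [hmap]
    refine hu _ (Measure.isProbabilityMeasure_map measurable_subtype_coe.aemeasurable)
      ⟨σ.continuous.measurable, by rw [← hmapS, hSρ.map_eq]⟩ ?_
    rw [hemb.ae_map_iff]
    exact ae_of_all _ fun y => y.2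
  have hmixS : CesaroMixing ν S := by
    obtain ⟨y₀⟩ : Nonempty m.support := ν.nonempty_of_neZero
    obtain ⟨r, hr, hre⟩ := hemb.exists_measurable_extend measurable_id fun _ => ⟨y₀⟩
    have hre' : ∀ y : m.support, r y = y := fun y => congrFun hre y
    have h1 : m.map r = ν := by
      calc m.map r = (ν.map Subtype.val).map r := by rw [hmap]
        _ = ν := by rw [Measure.map_map hr measurable_subtype_coe, hre, Measure.map_id]
    rw [← h1]
    refine hmix.map hσ hr S.continuous.measurable ?_
    filter_upwards [hKae] with ω hω
    have h2 := hre' ⟨ω, hω⟩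
    have h3 := hre' (S ⟨ω, hω⟩)
    rw [hS] at h3
    simp only at h2 h3
    rw [h2, h3]
  have hcomp : CompactSpace m.support := isCompact_iff_compactSpace.1 hclosed.isCompact
  have hfinal := strictlyErgodic_of_uniquelyErgodic hSν huS hmixS d
  exact ⟨m.support, inferInstance, hcomp, inferInstance, inferInstance, S, ν, Subtype.val, hprob, hSν, hfinal.1, hfinal.2, hemb, hmap, hS⟩

/-- A topological model obtained from a factor map to a compact system which is injective almost
everywhere. -/
theorem exists_model_of_support_uniquelyErgodic {X : Type*} [MeasurableSpace X] {μ : Measure X}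
    [IsProbabilityMeasure μ] {T : X → X} (hT : MeasurePreserving T μ μ) (hmix : CesaroMixing μ T)
    {Ω : Type} [TopologicalSpace Ω] [CompactSpace Ω] [TopologicalSpace.MetrizableSpace Ω]
    [MeasurableSpace Ω] [BorelSpace Ω] {σ : Ω ≃ₜ Ω} {Φ : X → Ω} (hΦ : Measurable Φ)
    (hΦT : ∀ x, Φ (T x) = σ (Φ x)) {D : Ω → X} (hD : Measurable D) (hDΦ : ∀ᵐ x ∂μ, D (Φ x) = x)
    (hu : ∀ ρ : Measure Ω, IsProbabilityMeasure ρ → MeasurePreserving σ ρ ρ →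
      (∀ᵐ ω ∂ρ, ω ∈ (μ.map Φ).support) → ρ = μ.map Φ) (d : ℕ) :
    ∃ (Y : Type) (_ : MetricSpace Y) (_ : CompactSpace Y) (_ : MeasurableSpace Y)
      (_ : BorelSpace Y) (S : Y ≃ₜ Y) (ν : Measure Y),
      IsModel μ T S ν ∧ StrictlyErgodicHomeo S ∧
      ∀ y : Y, StrictlyErgodicOn (apGens S d)
        (closure (grpOrbit (apGens S d) (fun _ : Fin d => y))) := by
  have hprob : IsProbabilityMeasure (μ.map Φ) := Measure.isProbabilityMeasure_map hΦ.aemeasurable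
  have hσm := σ.continuous.measurable
  have hσ : MeasurePreserving σ (μ.map Φ) (μ.map Φ) := ⟨hσm, by
    rw [Measure.map_map hσm hΦ]
    conv_rhs => rw [← hT.map_eq, Measure.map_map hΦ hT.measurable]
    congr 1
    funext x
    exact (hΦT x).symm⟩
  obtain ⟨Y, i1, i2, i3, i4, S, ν, e, hν, hSν, h1, h2, he, hmap, heS⟩ :=
    exists_support_system hσ (hmix.map hT hΦ hσm (ae_of_all _ hΦT)) hu d
  refine ⟨Y, i1, i2, i3, i4, S, ν, ⟨hν, hSν, ?_⟩, h1, h2⟩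
  obtain ⟨y₀⟩ : Nonempty Y := ν.nonempty_of_neZero
  obtain ⟨r, hr, hre⟩ := he.exists_measurable_extend measurable_id fun _ => ⟨y₀⟩
  have hre' : ∀ y, r (e y) = y := fun y => congrFun hre y
  have her : ∀ᵐ x ∂μ, e (r (Φ x)) = Φ x := by
    refine ae_of_ae_map (f := Φ) hΦ.aemeasurable (p := fun ω => e (r ω) = ω) ?_
    rw [← hmap, he.ae_map_iff]
    exact ae_of_all _ fun y => by rw [hre']
  refine ⟨r ∘ Φ, D ∘ e, hr.comp hΦ, hD.comp he.measurable, ?_, ?_, ?_, ?_⟩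
  · rw [← Measure.map_map hr hΦ, ← hmap, Measure.map_map hr he.measurable, hre, Measure.map_id]
  · filter_upwards [her, hDΦ] with x hx hx'
    simp only [Function.comp_apply, hx, hx']
  · have h3 : ∀ᵐ ω ∂(μ.map Φ), Φ (D ω) = ω := by
      have hDm : MeasurableSet {ω | Φ (D ω) = ω} :=
        measurableSet_eq_fun (hΦ.comp hD) measurable_id
      rw [ae_map_iff hΦ.aemeasurable hDm]
      filter_upwards [hDΦ] with x hx
      rw [hx]
    rw [← hmap, he.ae_map_iff] at h3
    filter_upwards [h3] with y hy
    simp only [Function.comp_apply, hy, hre']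
  · filter_upwards [her] with x hx
    simp only [Function.comp_apply]
    rw [hΦT, ← hre' (S (r (Φ x))), heS, hx]

/-- The shift on doubly infinite sequences of elements of the Cantor space. -/
def shiftHomeo : (ℤ × ℕ → Bool) ≃ₜ (ℤ × ℕ → Bool) where
  toFun ω p := ω (p.1 + 1, p.2)
  invFun ω p := ω (p.1 - 1, p.2)
  left_inv ω := by funext p; simp
  right_inv ω := by funext p; simp
  continuous_toFun := continuous_pi fun p => continuous_apply _
  continuous_invFun := continuous_pi fun p => continuous_apply _

theorem shiftHomeo_iterate (ω : ℤ × ℕ → Bool) (n : ℕ) (p : ℤ × ℕ) :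
    (shiftHomeo^[n] ω) p = ω (p.1 + n, p.2) := by
  induction n generalizing p with
  | zero => simp
  | succ n ih =>
    rw [Function.iterate_succ_apply']
    change (shiftHomeo^[n] ω) (p.1 + 1, p.2) = _
    rw [ih]
    congr 2
    push_cast
    ring

/-- The pattern seen in a finite window. -/
def windowPattern (m : ℕ) (ω : ℤ × ℕ → Bool) : Fin m → Fin m → Bool :=
  fun i j => ω ((i : ℕ), j)

theorem continuous_windowPattern (m : ℕ) : Continuous (windowPattern m) :=
  continuous_pi fun _ => continuous_pi fun _ => continuous_apply _

theorem measurable_windowPattern (m : ℕ) : Measurable (windowPattern m) :=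
  measurable_pi_lambda _ fun _ => measurable_pi_lambda _ fun _ => measurable_pi_apply _

theorem windowPattern_iterate (m n : ℕ) (ω : ℤ × ℕ → Bool) :
    windowPattern m (shiftHomeo^[n] ω) =
    fun (i j : Fin m) => ω ((n + i : ℕ), (j : ℕ)) := by
  funext i j
  rw [windowPattern, shiftHomeo_iterate]
  congr 2
  push_cast
  ring

/-- Shift invariant measures are determined by the distributions of window patterns. -/
theorem eq_of_windowPattern {ρ ρ' : Measure (ℤ × ℕ → Bool)} [IsProbabilityMeasure ρ]
    [IsProbabilityMeasure ρ'] (hρ : MeasurePreserving shiftHomeo ρ ρ)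
    (hρ' : MeasurePreserving shiftHomeo ρ' ρ')
    (h : ∀ m S, ρ (windowPattern m ⁻¹' S) = ρ' (windowPattern m ⁻¹' S)) : ρ = ρ' := by
  classical
  refine IsProjectiveLimit.unique (P := fun I => ρ'.map I.restrict) (fun I => ?_) fun I => rfl
  ext s hs
  have hIm : Measurable (I.restrict : (ℤ × ℕ → Bool) → _) := by fun_prop
  rw [Measure.map_apply hIm hs, Measure.map_apply hIm hs]
  set k : ℕ := I.sup fun p => p.1.natAbs + p.2 + 1 with hk
  have hIk : ∀ p ∈ I, p.1.natAbs + p.2 + 1 ≤ k := fun p hp =>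
    Finset.le_sup (f := fun p : ℤ × ℕ => p.1.natAbs + p.2 + 1) hp
  have hb1 : ∀ p : I, (p.1.1 + k).toNat < 2 * k := fun p => by have := hIk _ p.2; omega
  have hb2 : ∀ p : I, p.1.2 < 2 * k := fun p => by have := hIk _ p.2; omega
  set W : Set (Fin (2 * k) → Fin (2 * k) → Bool) :=
    (fun P (p : I) => P ⟨_, hb1 p⟩ ⟨_, hb2 p⟩) ⁻¹' s with hW
  have hpre : windowPattern (2 * k) ⁻¹' W = shiftHomeo^[k] ⁻¹' (I.restrict ⁻¹' s) := by
    ext ω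
    simp only [hW, Set.mem_preimage]
    have : (fun p : I => windowPattern (2 * k) ω ⟨_, hb1 p⟩ ⟨_, hb2 p⟩) =
        I.restrict (shiftHomeo^[k] ω) := by
      funext p
      rw [Finset.restrict, shiftHomeo_iterate, windowPattern]
      have := hIk _ p.2
      congr 2
      simp only
      omega
    rw [this]
  have h1 := h (2 * k) W
  rw [hpre, (hρ.iterate k).measure_preimage (hIm hs).nullMeasurableSet,
    (hρ'.iterate k).measure_preimage (hIm hs).nullMeasurableSet] at h1
  exact h1

/-- A shift invariant measure with uniform pattern frequencies is the only invariant measure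
on its support. -/
theorem eq_of_uniform_frequencies {ρ m : Measure (ℤ × ℕ → Bool)} [IsProbabilityMeasure ρ]
    [IsProbabilityMeasure m] (hρ : MeasurePreserving shiftHomeo ρ ρ)
    (hm : MeasurePreserving shiftHomeo m m)
    (hfreq : ∀ (k : ℕ) (S : Set (Fin k → Fin k → Bool)) (ε : ℝ), 0 < ε → ∃ N : ℕ, 0 < N ∧
      ∃ c : ℝ, ∀ᵐ ω ∂m, |∑ n ∈ Finset.range N,
        S.indicator (fun _ => (1 : ℝ)) (windowPattern k (shiftHomeo^[n] ω)) - c * N| ≤ ε * N)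
    (hsupp : ∀ᵐ ω ∂ρ, ω ∈ m.support) : ρ = m := by
  refine eq_of_windowPattern hρ hm fun k S => ?_
  rw [← measureReal_eq_measureReal_iff]
  refine eq_of_forall_dist_le fun ε hε => ?_
  obtain ⟨N, hN, c, hc⟩ := hfreq k S (ε / 2) (by positivity)
  have hN' : (0 : ℝ) < N := by exact_mod_cast hN
  have hSm : MeasurableSet S := (Set.toFinite S).measurableSet
  have hScont : Continuous (S.indicator fun _ => (1 : ℝ)) := continuous_of_discreteTopology
  have hcont : Continuous fun ω : ℤ × ℕ → Bool => ∑ n ∈ Finset.range N,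
      S.indicator (fun _ => (1 : ℝ)) (windowPattern k (shiftHomeo^[n] ω)) :=
    continuous_finsetSum _ fun n _ => hScont.comp
      ((continuous_windowPattern k).comp (shiftHomeo.continuous.iterate n))
  have hclosed : IsClosed {ω : ℤ × ℕ → Bool | |∑ n ∈ Finset.range N,
      S.indicator (fun _ => (1 : ℝ)) (windowPattern k (shiftHomeo^[n] ω)) - c * N| ≤
      ε / 2 * N} :=
    isClosed_le (hcont.sub continuous_const).abs continuous_const
  have hsub := Measure.support_subset_of_isClosed hclosed hc
  have key : ∀ θ : Measure (ℤ × ℕ → Bool), IsProbabilityMeasure θ →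
      MeasurePreserving shiftHomeo θ θ → (∀ᵐ ω ∂θ, ω ∈ m.support) →
      |θ.real (windowPattern k ⁻¹' S) - c| ≤ ε / 2 := by
    intro θ hθ hθs hθsupp
    have h1 : ∀ n : ℕ, ∫ ω, S.indicator (fun _ => (1 : ℝ)) (windowPattern k (shiftHomeo^[n] ω)) ∂θ
        = θ.real (windowPattern k ⁻¹' S) := by
      intro n
      have h2 : (fun ω => S.indicator (fun _ => (1 : ℝ)) (windowPattern k (shiftHomeo^[n] ω))) =
          (shiftHomeo^[n] ⁻¹' (windowPattern k ⁻¹' S)).indicator 1 := rfl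
      have h3 := (measurable_windowPattern k) hSm
      rw [h2, integral_indicator_one (((hθs.iterate n).measurable) h3),
        (hθs.iterate n).measureReal_preimage h3.nullMeasurableSet]
    have h4 : ∀ n ∈ Finset.range N, Integrable (fun ω =>
        S.indicator (fun _ => (1 : ℝ)) (windowPattern k (shiftHomeo^[n] ω))) θ := by
      intro n _
      refine ((integrable_const (1 : ℝ)).indicator
        (((hθs.iterate n).measurable) ((measurable_windowPattern k) hSm))).congr
        (ae_of_all _ fun ω => rfl)
    have h5 : ∫ ω, (∑ n ∈ Finset.range N,
        S.indicator (fun _ => (1 : ℝ)) (windowPattern k (shiftHomeo^[n] ω)) - c * N) ∂θ =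
        (θ.real (windowPattern k ⁻¹' S) - c) * N := by
      rw [integral_sub (integrable_finsetSum _ h4) (integrable_const _),
        integral_finsetSum _ h4, Finset.sum_congr rfl fun n _ => h1 n]
      simp
      ring
    have h6 := norm_integral_le_of_norm_le_const (μ := θ) (C := ε / 2 * N)
      (f := fun ω => ∑ n ∈ Finset.range N,
        S.indicator (fun _ => (1 : ℝ)) (windowPattern k (shiftHomeo^[n] ω)) - c * N)
      (hθsupp.mono fun ω hω => hsub hω)
    rw [h5, probReal_univ, mul_one, Real.norm_eq_abs, abs_mul, Nat.abs_cast] at h6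
    exact le_of_mul_le_mul_right h6 hN'
  have e1 := abs_le.1 (key ρ inferInstance hρ hsupp)
  have e2 := abs_le.1 (key m inferInstance hm Measure.support_mem_ae)
  rw [Real.dist_eq, abs_le]
  constructor <;> linarith [e1.1, e1.2, e2.1, e2.2]

theorem measurable_zpow_apply {X : Type*} [MeasurableSpace X] (T : X ≃ᵐ X) (n : ℤ) :
    Measurable fun x => ((T.toEquiv : Equiv.Perm X) ^ n) x := by
  induction n using Int.induction_on with
  | zero => simpa using measurable_id'
  | succ n ih =>
    simp only [zpow_add_one, Equiv.Perm.mul_apply]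
    exact ih.comp T.measurable
  | pred n ih =>
    simp only [zpow_sub_one, Equiv.Perm.mul_apply]
    exact ih.comp T.symm.measurable

theorem exists_model_of_nullSingletonClass {X : Type*} [MeasurableSpace X] [StandardBorelSpace X]
    {μ : Measure X} [IsProbabilityMeasure μ] [NullSingletonClass μ] {T : X ≃ᵐ X}
    (hT : Ergodic T μ) (hmix : CesaroMixing μ T) (d : ℕ) :
    ∃ (Y : Type) (_ : MetricSpace Y) (_ : CompactSpace Y) (_ : MeasurableSpace Y)
      (_ : BorelSpace Y) (S : Y ≃ₜ Y) (ν : Measure Y),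
      IsModel μ (⇑T) S ν ∧ StrictlyErgodicHomeo S ∧
      ∀ y : Y, StrictlyErgodicOn (apGens S d)
        (closure (grpOrbit (apGens S d) (fun _ : Fin d => y))) := by
  obtain ⟨F, D, hF, hD, hDF, hfreq⟩ := exists_decodable_coding hT
  let P : Equiv.Perm X := T.toEquiv
  set Φ : X → ℤ × ℕ → Bool := fun x p => F ((P ^ p.1) x) p.2 with hΦ
  have hΦm : Measurable Φ := measurable_pi_lambda _ fun p =>
    (measurable_pi_apply p.2).comp (hF.comp (measurable_zpow_apply T p.1))
  have hΦT : ∀ x, Φ (T x) = shiftHomeo (Φ x) := by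
    intro x
    funext p
    change F ((P ^ p.1) (P x)) p.2 = F ((P ^ (p.1 + 1)) x) p.2
    rw [zpow_add_one, Equiv.Perm.mul_apply]
  have hprob : IsProbabilityMeasure (μ.map Φ) := Measure.isProbabilityMeasure_map hΦm.aemeasurable
  have hσm := shiftHomeo.continuous.measurable
  have hσ : MeasurePreserving shiftHomeo (μ.map Φ) (μ.map Φ) := ⟨hσm, by
    rw [Measure.map_map hσm hΦm]
    conv_rhs => rw [← hT.toMeasurePreserving.map_eq, Measure.map_map hΦm T.measurable]
    congr 1
    funext x
    exact (hΦT x).symm⟩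
  refine exists_model_of_support_uniquelyErgodic hT.toMeasurePreserving hmix hΦm hΦT
    (D := fun ω => D fun j => ω (0, j))
    (hD.comp (measurable_pi_lambda _ fun j => measurable_pi_apply _)) ?_ ?_ d
  · filter_upwards [hDF] with x hx
    simpa [hΦ] using hx
  · intro ρ hρ hρσ hsupp
    refine eq_of_uniform_frequencies hρσ hσ (fun k S ε hε => ?_) hsupp
    obtain ⟨N, hN, c, hc⟩ := hfreq k S ε hε
    refine ⟨N, hN, c, ?_⟩
    have hwin : ∀ n x, windowPattern k (shiftHomeo^[n] (Φ x)) =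
        fun (i j : Fin k) => F (T^[n + i] x) j := by
      intro n x
      rw [windowPattern_iterate]
      funext i j
      change F ((P ^ ((n + i : ℕ) : ℤ)) x) j = F (T^[n + i] x) j
      rw [zpow_natCast, Equiv.Perm.coe_pow]
      rfl
    have hSm : MeasurableSet S := (Set.toFinite S).measurableSet
    have hmeas : Measurable fun ω : ℤ × ℕ → Bool => ∑ n ∈ Finset.range N,
        S.indicator (fun _ => (1 : ℝ)) (windowPattern k (shiftHomeo^[n] ω)) :=
      Finset.measurable_fun_sum _ fun n _ => (measurable_const.indicator hSm).comp
        ((measurable_windowPattern k).comp (hσm.iterate n))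
    rw [ae_map_iff hΦm.aemeasurable
      (measurableSet_le (hmeas.sub_const _).abs measurable_const)]
    filter_upwards [hc] with x hx
    simpa only [hwin] using hx

/-- A point mass is modelled by the one-point system. -/
theorem exists_model_of_ae_eq {X : Type*} [MeasurableSpace X] {μ : Measure X}
    [IsProbabilityMeasure μ] {T : X → X} (hT : MeasurePreserving T μ μ) (hmix : CesaroMixing μ T)
    {x₀ : X} (hx₀ : ∀ᵐ x ∂μ, x = x₀) (d : ℕ) :
    ∃ (Y : Type) (_ : MetricSpace Y) (_ : CompactSpace Y) (_ : MeasurableSpace Y)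
      (_ : BorelSpace Y) (S : Y ≃ₜ Y) (ν : Measure Y),
      IsModel μ T S ν ∧ StrictlyErgodicHomeo S ∧
      ∀ y : Y, StrictlyErgodicOn (apGens S d)
        (closure (grpOrbit (apGens S d) (fun _ : Fin d => y))) := by
  refine exists_model_of_support_uniquelyErgodic hT hmix (σ := Homeomorph.refl Unit)
    (Φ := fun _ => ()) measurable_const (fun _ => rfl) (D := fun _ => x₀) measurable_const
    (hx₀.mono fun x hx => hx.symm) (fun ρ hρ _ _ => ?_) d
  have : IsProbabilityMeasure (μ.map fun _ => ()) :=
    Measure.isProbabilityMeasure_map measurable_const.aemeasurable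
  ext s
  rcases s.eq_empty_or_nonempty with rfl | ⟨⟨⟩, hs⟩
  · simp
  · have hs' : s = Set.univ := Set.eq_univ_of_forall fun _ => hs
    rw [hs', measure_univ, measure_univ]

/-- **Theorem (weakly mixing systems, arithmetic progressions).** A weakly mixing invertible
measure-preserving system on a Lebesgue (standard Borel) probability space has, for every
`d ≥ 1`, a strictly ergodic topological model `(Y, S)` such that the action of
`⟨τ_d, σ_d⟩` on `N_d(Y)` (the orbit closure of a diagonal point) is strictly ergodic. -/
theorem weakMixing_ap_model {X : Type*} [MeasurableSpace X] [StandardBorelSpace X]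
    (μ : Measure X) [IsProbabilityMeasure μ] (T : X ≃ᵐ X)
    (hT : MeasurePreserving T μ μ)
    (hwm : Ergodic (Prod.map T T) (μ.prod μ))
    (d : ℕ) (hd : 1 ≤ d) :
    ∃ (Y : Type) (_ : MetricSpace Y) (_ : CompactSpace Y) (_ : MeasurableSpace Y)
      (_ : BorelSpace Y) (S : Y ≃ₜ Y) (ν : Measure Y),
      IsModel μ (⇑T) S ν ∧ StrictlyErgodicHomeo S ∧
      ∀ y : Y, StrictlyErgodicOn (apGens S d)
        (closure (grpOrbit (apGens S d) (fun _ : Fin d => y))) := by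
  have hmix := cesaroMixing_of_ergodic_prod T.measurable hwm
  have herg : Ergodic T μ :=
    (measurePreserving_fst (μ := μ) (ν := μ)).ergodic_of_ergodic_semiconj hwm
      T.measurable fun _ => rfl
  rcases hwm.toPreErgodic.ae_mem_or_ae_notMem (s := {p : X × X | p.1 = p.2})
    (measurableSet_eq_fun measurable_fst measurable_snd)
    (by ext p; exact T.injective.eq_iff) with h | h
  · obtain ⟨x₀, hx₀⟩ := (Measure.ae_ae_of_ae_prod h).exists
    exact exists_model_of_ae_eq hT hmix (hx₀.mono fun x hx => Eq.symm hx) d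
  · have hatom : NullSingletonClass μ := ⟨fun x => by
      have h1 : (μ.prod μ) ({x} ×ˢ {x}) = 0 := by
        refine measure_mono_null ?_ (ae_iff.1 h)
        rintro ⟨a, b⟩ ⟨ha, hb⟩
        have ha : a = x := ha
        have hb : b = x := hb
        simp [ha, hb]
      rwa [Measure.prod_prod, mul_self_eq_zero] at h1⟩
    exact exists_model_of_nullSingletonClass herg hmix d

end HSY
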